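/- arXiv:0902.4016 — 5 statements merged into one kernel-verified Lean document; each statement's English description precedes it below -/
import Mathlib

section
/- Let 𝒜 be an abelian category with enough injectives satisfying AB4*-n. Let {M_α} and {L_α} be families of bounded below complexes of injective objects, and φ_α : M_α → L_α morphisms such that H^i(φ_α) is an isomorphism for all i ≥ t and all α. Then H^i(∏ M_α) → H^i(∏ L_α) is an isomorphism for all i ≥ t + n + 1. -/
/-!
STATEMENT 5 (Lemma 4.4): Let `𝒜` be an abelian category with enough injectives satisfying
AB4*-n.  Let `{M_α}` and `{L_α}` be families of bounded below complexes of injective objects,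
and `φ_α : M_α → L_α` morphisms such that `H^i(φ_α)` is an isomorphism for all `i ≥ t` and
all `α`.  Then `H^i(∏ M_α) → H^i(∏ L_α)` is an isomorphism for all `i ≥ t + n + 1`.
-/

open CategoryTheory Limits

universe v u

/-- AB4*-`n`: the derived functors of product, computed via injective resolutions, vanish in
degrees `> n`. -/
def AB4StarMinus (C : Type u) [Category.{v} C] [Abelian C] [HasProducts.{0} C] (n : ℕ) : Prop :=
  ∀ (I : Type) (A : I → C) (R : ∀ i, InjectiveResolution (A i)) (q : ℕ), n < q →
    IsZero ((HomologicalComplex.homologyFunctor C (ComplexShape.up ℕ) q).obj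
      (∏ᶜ fun i => (R i).cocomplex))

section Helpers

variable {C : Type u} [Category.{v} C] [Abelian C]

/-- The cone has zero homology in degree `n` iff `H^n` is epi and `H^{n+1}` is mono. -/
lemma isZero_homology_mappingCone_iff {K L : CochainComplex C ℤ} (φ : K ⟶ L) (n m : ℤ)
    (h : n + 1 = m) :
    IsZero ((CochainComplex.mappingCone φ).homology n) ↔
      Epi (HomologicalComplex.homologyMap φ n) ∧ Mono (HomologicalComplex.homologyMap φ m) := by
  let F := HomotopyCategory.homologyFunctor C (ComplexShape.up ℤ) 0
  let T := CochainComplex.mappingCone.triangleh φ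
  have hT : T ∈ Pretriangulated.distinguishedTriangles :=
    HomotopyCategory.mappingCone_triangleh_distinguished φ
  have h₁ := (F.homologySequence_exact₃ T hT n m h).isZero_X₂_iff
  have h₂ := F.homologySequence_mono_shift_map_mor₁_iff T hT n m h
  have h₃ := F.homologySequence_epi_shift_map_mor₁_iff T hT n
  have e (k : ℤ) : Arrow.mk ((F.shift k).map T.mor₁) ≅
      Arrow.mk (HomologicalComplex.homologyMap φ k) :=
    Arrow.isoMk ((HomotopyCategory.homologyFunctorFactors C (ComplexShape.up ℤ) k).app K)
      ((HomotopyCategory.homologyFunctorFactors C (ComplexShape.up ℤ) k).app L)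
      ((HomotopyCategory.homologyFunctorFactors C (ComplexShape.up ℤ) k).hom.naturality φ).symm
  have e₁ := (MorphismProperty.epimorphisms C).arrow_mk_iso_iff (e n)
  have e₂ := (MorphismProperty.monomorphisms C).arrow_mk_iso_iff (e m)
  simp only [MorphismProperty.epimorphisms.iff, MorphismProperty.monomorphisms.iff] at e₁ e₂
  rw [← e₁, ← e₂, h₂, h₃]
  refine Iff.trans ?_ h₁
  exact ((HomotopyCategory.homologyFunctorFactors C (ComplexShape.up ℤ) n).app
    (CochainComplex.mappingCone φ)).isZero_iff.symm

open CochainComplex in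
lemma mappingCone_map_f_fst {K₁ L₁ K₂ L₂ : CochainComplex C ℤ} (φ₁ : K₁ ⟶ L₁) (φ₂ : K₂ ⟶ L₂)
    (a : K₁ ⟶ K₂) (b : L₁ ⟶ L₂) (comm : φ₁ ≫ b = a ≫ φ₂) (i : ℤ) :
    (mappingCone.map φ₁ φ₂ a b comm).f i ≫ (mappingCone.fst φ₂).1.v i (i + 1) rfl =
      (mappingCone.fst φ₁).1.v i (i + 1) rfl ≫ a.f (i + 1) := by
  apply mappingCone.ext_from φ₁ (i + 1) i rfl <;> simp [mappingCone.map]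

open CochainComplex in
lemma mappingCone_map_f_snd {K₁ L₁ K₂ L₂ : CochainComplex C ℤ} (φ₁ : K₁ ⟶ L₁) (φ₂ : K₂ ⟶ L₂)
    (a : K₁ ⟶ K₂) (b : L₁ ⟶ L₂) (comm : φ₁ ≫ b = a ≫ φ₂) (i : ℤ) :
    (mappingCone.map φ₁ φ₂ a b comm).f i ≫ (mappingCone.snd φ₂).v i i (add_zero i) =
      (mappingCone.snd φ₁).v i i (add_zero i) ≫ b.f i := by
  apply mappingCone.ext_from φ₁ (i + 1) i rfl <;> simp [mappingCone.map]

open CochainComplex in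
/-- A morphism to a mapping cone in degree `i` with given components. -/
noncomputable def toCone {K L : CochainComplex C ℤ} (φ : K ⟶ L) (i : ℤ) {A : C}
    (f : A ⟶ K.X (i + 1)) (g : A ⟶ L.X i) : A ⟶ (mappingCone φ).X i :=
  f ≫ (mappingCone.inl φ).v (i + 1) i (by lia) + g ≫ (mappingCone.inr φ).f i

open CochainComplex in
lemma toCone_fst {K L : CochainComplex C ℤ} (φ : K ⟶ L) (i : ℤ) {A : C}
    (f : A ⟶ K.X (i + 1)) (g : A ⟶ L.X i) :
    toCone φ i f g ≫ (mappingCone.fst φ).1.v i (i + 1) rfl = f := by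
  simp [toCone]

open CochainComplex in
lemma toCone_snd {K L : CochainComplex C ℤ} (φ : K ⟶ L) (i : ℤ) {A : C}
    (f : A ⟶ K.X (i + 1)) (g : A ⟶ L.X i) :
    toCone φ i f g ≫ (mappingCone.snd φ).v i i (add_zero i) = g := by
  simp [toCone]

open CochainComplex in
/-- The mapping cone commutes with products: the mapping cone of a product of morphisms,
with its projections, is a product of mapping cones. -/
noncomputable def isLimitMappingCone [HasProducts.{0} C] {I : Type}
    {M L : I → CochainComplex C ℤ} (φ : ∀ α, M α ⟶ L α) :
    IsLimit (Fan.mk (mappingCone (Limits.Pi.map φ : (∏ᶜ M) ⟶ ∏ᶜ L))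
      (fun α => mappingCone.map (Limits.Pi.map φ) (φ α) (Pi.π M α) (Pi.π L α) (by simp))) := by
  refine HomologicalComplex.isLimitOfEval _ _ (fun i => ?_)
  refine (isLimitMapConeFanMkEquiv (HomologicalComplex.eval C (ComplexShape.up ℤ) i) _ _).symm ?_
  have hM (k : ℤ) := isLimitFanMkObjOfIsLimit (HomologicalComplex.eval C (ComplexShape.up ℤ) k)
    M _ (productIsProduct M)
  have hL (k : ℤ) := isLimitFanMkObjOfIsLimit (HomologicalComplex.eval C (ComplexShape.up ℤ) k)
    L _ (productIsProduct L)
  have hM' (k : ℤ) {A : C} (f : ∀ α, A ⟶ (M α).X k) (α : I) :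
      Fan.IsLimit.lift (hM k) f ≫ (Pi.π M α).f k = f α := Fan.IsLimit.fac (hM k) f α
  have hL' (k : ℤ) {A : C} (f : ∀ α, A ⟶ (L α).X k) (α : I) :
      Fan.IsLimit.lift (hL k) f ≫ (Pi.π L α).f k = f α := Fan.IsLimit.fac (hL k) f α
  have h₁ (α : I) := mappingCone_map_f_fst (Limits.Pi.map φ) (φ α) (Pi.π M α) (Pi.π L α)
    (by simp) i
  have h₂ (α : I) := mappingCone_map_f_snd (Limits.Pi.map φ) (φ α) (Pi.π M α) (Pi.π L α)
    (by simp) i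
  refine Fan.IsLimit.mk _
    (fun s => toCone (Limits.Pi.map φ) i
      (Fan.IsLimit.lift (hM (i + 1)) (fun α => s.proj α ≫
        (mappingCone.fst (φ α)).1.v i (i + 1) rfl))
      (Fan.IsLimit.lift (hL i) (fun α => s.proj α ≫
        (mappingCone.snd (φ α)).v i i (add_zero i)))) (fun s α => ?_) (fun s m hm => ?_)
  · apply mappingCone.ext_to (φ α) i (i + 1) rfl
    · refine (Category.assoc _ _ _).trans ?_
      refine (congrArg _ (h₁ α)).trans ?_
      refine (Category.assoc _ _ _).symm.trans ?_
      refine (congrArg (· ≫ (Pi.π M α).f (i + 1)) (toCone_fst _ _ _ _)).trans ?_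
      exact hM' (i + 1) _ α
    · refine (Category.assoc _ _ _).trans ?_
      refine (congrArg _ (h₂ α)).trans ?_
      refine (Category.assoc _ _ _).symm.trans ?_
      refine (congrArg (· ≫ (Pi.π L α).f i) (toCone_snd _ _ _ _)).trans ?_
      exact hL' i _ α
  · apply mappingCone.ext_to (Limits.Pi.map φ) i (i + 1) rfl
    · refine Fan.IsLimit.hom_ext (hM (i + 1)) _ _ (fun α => ?_)
      refine (Category.assoc _ _ _).trans ?_
      refine (congrArg _ (h₁ α).symm).trans ?_
      refine (Category.assoc _ _ _).symm.trans ?_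
      refine (congrArg (· ≫ (mappingCone.fst (φ α)).1.v i (i + 1) rfl) (hm α)).trans ?_
      refine (hM' (i + 1) (fun α => s.proj α ≫ (mappingCone.fst (φ α)).1.v i (i + 1) rfl)
        α).symm.trans ?_
      exact congrArg (· ≫ (Pi.π M α).f (i + 1)) (toCone_fst _ _ _ _).symm
    · refine Fan.IsLimit.hom_ext (hL i) _ _ (fun α => ?_)
      refine (Category.assoc _ _ _).trans ?_
      refine (congrArg _ (h₂ α).symm).trans ?_
      refine (Category.assoc _ _ _).symm.trans ?_
      refine (congrArg (· ≫ (mappingCone.snd (φ α)).v i i (add_zero i)) (hm α)).trans ?_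
      refine (hL' i (fun α => s.proj α ≫ (mappingCone.snd (φ α)).v i i (add_zero i))
        α).symm.trans ?_
      exact congrArg (· ≫ (Pi.π L α).f i) (toCone_snd _ _ _ _).symm

/-- An `ℕ`-indexed complex of injectives exact in positive degrees is an injective resolution
of the kernel of its first differential. -/
noncomputable def injectiveResolutionOfExact (K : CochainComplex C ℕ)
    (hK : ∀ k, Injective (K.X k)) (hex : ∀ k, K.ExactAt (k + 1)) :
    InjectiveResolution (kernel (K.d 0 1)) where
  cocomplex := K
  injective := hK
  ι := (CochainComplex.fromSingle₀Equiv _ _).symm ⟨kernel.ι (K.d 0 1), kernel.condition _⟩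
  quasiIso := ⟨fun n => by
    cases n
    · rw [CochainComplex.quasiIsoAt₀_iff, ShortComplex.quasiIso_iff_of_zeros]
      · refine (ShortComplex.exact_and_mono_f_iff_of_iso ?_).2
          ⟨ShortComplex.exact_kernel (K.d 0 1), by dsimp; infer_instance⟩
        exact ShortComplex.isoMk (Iso.refl _) (Iso.refl _) (Iso.refl _)
          (by simp; exact (Category.id_comp _).trans (Category.comp_id _).symm)
          (by simp; exact (Category.id_comp _).trans (Category.comp_id _).symm)
      · rfl
      · rfl
      · exact K.shape _ _ (by simp)
    · rw [quasiIsoAt_iff_exactAt]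
      · apply hex
      · apply CochainComplex.exactAt_succ_single_obj⟩

/-- Restriction along an embedding of complex shapes preserves limits. -/
lemma preservesLimits_restriction [HasProducts.{0} C] (I : Type) (s : ℤ) :
    PreservesLimitsOfShape (Discrete I)
      ((ComplexShape.embeddingUpIntGE s).restrictionFunctor C) := by
  apply HomologicalComplex.preservesLimitsOfShape_of_eval
  intro i
  exact (inferInstance : PreservesLimitsOfShape (Discrete I)
    (HomologicalComplex.eval C (ComplexShape.up ℤ) ((ComplexShape.embeddingUpIntGE s).f i)))

/-- The homology of the restriction to degrees `≥ s`. -/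
noncomputable def restrictionGEHomologyIso (K : CochainComplex C ℤ) (s : ℤ) (k : ℕ) (i : ℤ)
    (hi : s + (k + 1 : ℕ) = i) :
    (K.restriction (ComplexShape.embeddingUpIntGE s)).homology (k + 1) ≅ K.homology i :=
  K.restrictionHomologyIso (ComplexShape.embeddingUpIntGE s) k (k + 1) (k + 2)
    (i' := i - 1) (k' := i + 1) (by simp) (by simp)
    (by simp; lia) (by simp; lia) (by simp; lia) (by simp) (by simp)

/-- Products of complexes of injectives which are exact in degrees `≥ t`
are exact in degrees `≥ t + n`. -/
lemma isZero_homology_product [HasProducts.{0} C] (n : ℕ) (hC : AB4StarMinus C n)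
    {I : Type} (K : I → CochainComplex C ℤ) (hinj : ∀ α k, Injective ((K α).X k)) (t : ℤ)
    (hK : ∀ α (i : ℤ), t ≤ i → IsZero ((K α).homology i)) (i : ℤ) (hi : t + n ≤ i) :
    IsZero ((∏ᶜ K).homology i) := by
  let e := ComplexShape.embeddingUpIntGE (t - 1)
  have hP := preservesLimits_restriction (C := C) I (t - 1)
  let R (α : I) := injectiveResolutionOfExact ((K α).restriction e) (fun k => hinj α _)
    (fun k => by
      rw [HomologicalComplex.exactAt_iff_isZero_homology]
      exact (hK α (t + k) (by lia)).of_iso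
        (restrictionGEHomologyIso (K α) (t - 1) k (t + k) (by push_cast; lia)))
  obtain ⟨k, hk⟩ : ∃ k : ℕ, (t - 1) + (k + 1 : ℕ) = i := ⟨(i - t).toNat, by lia⟩
  have h := hC I _ R (k + 1) (by lia)
  exact (h.of_iso ((HomologicalComplex.homologyFunctor C (ComplexShape.up ℕ) (k + 1)).mapIso
    (PreservesProduct.iso (e.restrictionFunctor C) K))).of_iso
      (restrictionGEHomologyIso (∏ᶜ K) (t - 1) k i hk).symm

/-- The mapping cone of a morphism between complexes of injectives consists of injectives. -/
lemma injective_mappingCone_X {K L : CochainComplex C ℤ} (φ : K ⟶ L)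
    (hK : ∀ k, Injective (K.X k)) (hL : ∀ k, Injective (L.X k)) (i : ℤ) :
    Injective ((CochainComplex.mappingCone φ).X i) := by
  have := hK (i + 1)
  have := hL i
  exact Injective.of_iso (HomologicalComplex.homotopyCofiber.XIsoBiprod φ i (i + 1) rfl).symm
    inferInstance

end Helpers

theorem homology_product_iso_of_truncation_iso
    {C : Type u} [Category.{v} C] [Abelian C] [HasProducts.{0} C] [EnoughInjectives C]
    (n : ℕ) (hC : AB4StarMinus C n)
    {I : Type} (M L : I → CochainComplex C ℤ)
    (hMinj : ∀ α k, Injective ((M α).X k)) (hLinj : ∀ α k, Injective ((L α).X k))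
    (hMbb : ∀ α, ∃ a : ℤ, ∀ k < a, IsZero ((M α).X k))
    (hLbb : ∀ α, ∃ a : ℤ, ∀ k < a, IsZero ((L α).X k))
    (φ : ∀ α, M α ⟶ L α) (t : ℤ)
    (hφ : ∀ α (i : ℤ), t ≤ i → IsIso (HomologicalComplex.homologyMap (φ α) i)) :
    ∀ i : ℤ, t + n + 1 ≤ i → IsIso (HomologicalComplex.homologyMap (Limits.Pi.map φ : (∏ᶜ M) ⟶ ∏ᶜ L) i) := by
  intro i hi
  have key (j : ℤ) (hj : t + n ≤ j) :
      IsZero ((CochainComplex.mappingCone (Limits.Pi.map φ : (∏ᶜ M) ⟶ ∏ᶜ L)).homology j) := by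
    have h := isZero_homology_product n hC (fun α => CochainComplex.mappingCone (φ α))
      (fun α k => injective_mappingCone_X (φ α) (hMinj α) (hLinj α) k) t
      (fun α j hj => by
        have := hφ α j hj
        have := hφ α (j + 1) (by lia)
        rw [isZero_homology_mappingCone_iff (φ α) j (j + 1) rfl]
        exact ⟨inferInstance, inferInstance⟩) j hj
    exact h.of_iso ((HomologicalComplex.homologyFunctor C (ComplexShape.up ℤ) j).mapIso
      ((isLimitMappingCone φ).conePointUniqueUpToIso (productIsProduct _)))
  have := ((isZero_homology_mappingCone_iff _ (i - 1) i (by lia)).1 (key (i - 1) (by lia))).2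
  have := ((isZero_homology_mappingCone_iff _ i (i + 1) rfl).1 (key i (by lia))).1
  exact isIso_of_mono_of_epi _
end

section
/- Let 𝒜 be an abelian category with enough injectives satisfying AB4*-n for some nonnegative integer n. Then for every object N of the unbounded derived category D(𝒜), the natural map N → holim_{i≥0} N_{≥−i} is an isomorphism in D(𝒜). -/
open CategoryTheory Limits Pretriangulated

universe w v u

variable {C : Type u} [Category.{v} C] [Abelian C] [HasProducts.{0} C] [EnoughInjectives C]
  [HasDerivedCategory.{w} C]

/-- `(M, α, π)` is the inverse system of good truncations `M i = N_{≥ c i}` of `N`. -/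
def IsTruncGESystem (N : DerivedCategory C) (c : ℕ → ℤ) (M : ℕ → DerivedCategory C)
    (α : ∀ i, M (i + 1) ⟶ M i) (π : ∀ i, N ⟶ M i) : Prop :=
  (∀ i, π (i + 1) ≫ α i = π i) ∧
  (∀ (i : ℕ) (k : ℤ), c i ≤ k → IsIso ((DerivedCategory.homologyFunctor C k).map (π i))) ∧
  (∀ (i : ℕ) (k : ℤ), k < c i → IsZero ((DerivedCategory.homologyFunctor C k).obj (M i)))

section Aux0

variable {ι : Type} (L : ι → CochainComplex C ℤ)


/-- A map to a product of complexes that is componentwise null-homotopic is null-homotopic. -/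
lemma homotopyZero_to_pi {K : CochainComplex C ℤ} (f : K ⟶ ∏ᶜ L)
    (h : ∀ i, Nonempty (Homotopy (f ≫ Pi.π L i) 0)) : Nonempty (Homotopy f 0) := by
  let hh := fun i => (h i).some
  let F : ∀ q : ℤ, IsLimit (Fan.mk ((∏ᶜ L).X q) (fun i => (Pi.π L i).f q)) := fun q =>
    isLimitFanMkObjOfIsLimit (HomologicalComplex.eval C (ComplexShape.up ℤ) q) L (Pi.π L)
      (productIsProduct L)
  have hF : ∀ (q : ℤ) {Z : C} (x y : Z ⟶ (∏ᶜ L).X q),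
      (∀ i, x ≫ (Pi.π L i).f q = y ≫ (Pi.π L i).f q) → x = y := fun q Z x y hxy =>
    Fan.IsLimit.hom_ext (F q) _ _ hxy
  have hlift : ∀ (p q : ℤ) (i : ι), Fan.IsLimit.lift (F q) (fun i => (hh i).hom p q) ≫
      (Pi.π L i).f q = (hh i).hom p q := fun p q i => Fan.IsLimit.fac (F q) _ i
  refine ⟨{ hom := fun p q => Fan.IsLimit.lift (F q) (fun i => (hh i).hom p q)
            zero := ?_
            comm := ?_ }⟩
  · intro p q hpq
    apply hF
    intro i
    rw [hlift, (hh i).zero p q hpq, zero_comp]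
  · intro p
    apply hF
    intro i
    have := (hh i).comm p
    rw [dNext_eq _ (show (ComplexShape.up ℤ).Rel p (p+1) from rfl),
      prevD_eq _ (show (ComplexShape.up ℤ).Rel (p-1) p by simp)] at this ⊢
    simp only [HomologicalComplex.comp_f] at this
    simp only [Preadditive.add_comp, Category.assoc, hlift, this, HomologicalComplex.zero_f,
      add_zero, ← HomologicalComplex.Hom.comm]
    rw [← Category.assoc (Fan.IsLimit.lift _ _), hlift]

lemma isKInjective_pi [∀ i, (L i).IsKInjective] : (∏ᶜ L).IsKInjective where
  nonempty_homotopy_zero f hK := homotopyZero_to_pi L f fun _ =>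
    CochainComplex.IsKInjective.nonempty_homotopy_zero _ hK

end Aux0

section Aux1


lemma Q_map_surj (K L : CochainComplex C ℤ) [L.IsKInjective]
    (φ : DerivedCategory.Q.obj K ⟶ DerivedCategory.Q.obj L) :
    ∃ f : K ⟶ L, DerivedCategory.Q.map f = φ := by
  obtain ⟨g, hg⟩ := (CochainComplex.IsKInjective.Qh_map_bijective
      ((HomotopyCategory.quotient _ _).obj K) L).surjective
    ((DerivedCategory.quotientCompQhIso C).hom.app K ≫ φ ≫
      (DerivedCategory.quotientCompQhIso C).inv.app L)
  obtain ⟨f, rfl⟩ := (HomotopyCategory.quotient _ _).map_surjective g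
  refine ⟨f, ?_⟩
  have h2 := (DerivedCategory.quotientCompQhIso C).hom.naturality f
  dsimp at h2
  rw [hg] at h2
  simp only [Category.assoc, Iso.inv_hom_id_app] at h2
  erw [Category.comp_id] at h2
  exact ((cancel_epi _).1 h2).symm

lemma Q_map_eq_zero (K L : CochainComplex C ℤ) [L.IsKInjective] (f : K ⟶ L)
    (hf : DerivedCategory.Q.map f = 0) : Nonempty (Homotopy f 0) := by
  have h2 := (DerivedCategory.quotientCompQhIso C).hom.naturality f
  rw [hf, comp_zero] at h2
  dsimp at h2
  have h3 : DerivedCategory.Qh.map ((HomotopyCategory.quotient C (ComplexShape.up ℤ)).map f)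
      = 0 := by
    rw [← cancel_mono ((DerivedCategory.quotientCompQhIso C).hom.app L), zero_comp]
    exact h2
  refine ⟨HomotopyCategory.homotopyOfEq _ _ ?_⟩
  apply (CochainComplex.IsKInjective.Qh_map_bijective _ _).injective
  rw [h3, Functor.map_zero, Functor.map_zero]

end Aux1

section Aux2


/-- The product of K-injective complexes is the product in the derived category. -/
lemma isLimit_Q_pi {ι : Type} (L : ι → CochainComplex C ℤ) [∀ i, (L i).IsKInjective] :
    Nonempty (IsLimit (Fan.mk (DerivedCategory.Q.obj (∏ᶜ L))
      (fun i => DerivedCategory.Q.map (Pi.π L i)))) := by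
  have := isKInjective_pi L
  have key : ∀ (X : DerivedCategory C) (φ : ∀ i, X ⟶ DerivedCategory.Q.obj (L i)),
      ∃ l : X ⟶ DerivedCategory.Q.obj (∏ᶜ L),
        ∀ i, l ≫ DerivedCategory.Q.map (Pi.π L i) = φ i := by
    intro X φ
    let e := DerivedCategory.Q.objObjPreimageIso X
    choose f hf using fun i => Q_map_surj _ _ (e.hom ≫ φ i)
    refine ⟨e.inv ≫ DerivedCategory.Q.map (Pi.lift f), fun i => ?_⟩
    rw [Category.assoc, ← Functor.map_comp, Pi.lift_π, hf, Iso.inv_hom_id_assoc]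
  have uniq : ∀ (X : DerivedCategory C) (l : X ⟶ DerivedCategory.Q.obj (∏ᶜ L)),
      (∀ i, l ≫ DerivedCategory.Q.map (Pi.π L i) = 0) → l = 0 := by
    intro X l hl
    let e := DerivedCategory.Q.objObjPreimageIso X
    obtain ⟨f, hf⟩ := Q_map_surj _ _ (e.hom ≫ l)
    rw [← cancel_epi e.hom, comp_zero, ← hf]
    obtain ⟨h⟩ := homotopyZero_to_pi L f (fun i => Q_map_eq_zero _ _ _ (by
      rw [Functor.map_comp, hf, Category.assoc, hl, comp_zero]))
    rw [DerivedCategory.Q_map_eq_of_homotopy _ h, Functor.map_zero]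
  refine ⟨Fan.IsLimit.mk _ (fun s => (key _ s.proj).choose) (fun s => (key _ s.proj).choose_spec)
    (fun s m hm => ?_)⟩
  rw [← sub_eq_zero]
  apply uniq
  intro i
  rw [Preadditive.sub_comp, (key _ s.proj).choose_spec, sub_eq_zero]
  exact hm i

end Aux2

section Aux3


/-- A complex of injectives indexed by `ℕ` that is exact in positive degrees is an injective
resolution of the kernel of its first differential. -/
noncomputable def resolutionOfExact (K : CochainComplex C ℕ) (hI : ∀ n, Injective (K.X n))
    (hK : ∀ n, K.ExactAt (n + 1)) : InjectiveResolution (kernel (K.d 0 1)) where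
  cocomplex := K
  injective := hI
  ι := (CochainComplex.fromSingle₀Equiv _ _).symm ⟨kernel.ι (K.d 0 1), kernel.condition _⟩
  quasiIso := ⟨fun n => by
    cases n
    · rw [CochainComplex.quasiIsoAt₀_iff, ShortComplex.quasiIso_iff_of_zeros]
      · refine (ShortComplex.exact_and_mono_f_iff_of_iso ?_).2
          ⟨ShortComplex.exact_kernel (K.d 0 1), by dsimp; infer_instance⟩
        refine ShortComplex.isoMk (Iso.refl _) (Iso.refl _) (Iso.refl _) ?_ ?_
        · refine (Category.id_comp _).trans (Eq.trans ?_ (Category.comp_id _).symm)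
          exact (CochainComplex.fromSingle₀Equiv_symm_apply_f_zero (C := K)
            (kernel.ι (K.d 0 1)) (kernel.condition _)).symm
        · exact (Category.id_comp _).trans (Category.comp_id _).symm
      · rfl
      · rfl
      · exact K.shape _ _ (by simp)
    · rw [quasiIsoAt_iff_exactAt]
      · apply hK
      · apply CochainComplex.exactAt_succ_single_obj⟩

lemma restriction_homologyIso (K : CochainComplex C ℤ) (a : ℤ) (q : ℕ) :
    Nonempty ((K.restriction (ComplexShape.embeddingUpIntGE a)).homology (q + 1) ≅
      K.homology (a + (q + 1))) :=
  ⟨K.restrictionHomologyIso (ComplexShape.embeddingUpIntGE a) q (q + 1) (q + 2)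
    (by simp) (by simp) (i' := a + q) (j' := a + (q + 1)) (k' := a + (q + 2))
    (by simp) (by simp) (by simp)
    (by simp; ring) (by simp; ring)⟩

lemma restriction_pi_iso {ι : Type} (L : ι → CochainComplex C ℤ) (a : ℤ) :
    Nonempty ((∏ᶜ L).restriction (ComplexShape.embeddingUpIntGE a) ≅
      ∏ᶜ fun i => (L i).restriction (ComplexShape.embeddingUpIntGE a)) := by
  let Φ := (ComplexShape.embeddingUpIntGE a).restrictionFunctor C
  have : PreservesLimitsOfShape (Discrete ι) Φ := by
    apply HomologicalComplex.preservesLimitsOfShape_of_eval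
    intro j
    exact inferInstanceAs (PreservesLimitsOfShape (Discrete ι)
      (HomologicalComplex.eval C (ComplexShape.up ℤ) ((ComplexShape.embeddingUpIntGE a).f j)))
  exact ⟨PreservesProduct.iso Φ L⟩

lemma isZero_homology_pi (n : ℕ) (hC : AB4StarMinus C n) {ι : Type}
    (L : ι → CochainComplex C ℤ) (hI : ∀ i k, Injective ((L i).X k)) (a : ℤ)
    (hL : ∀ i k, a ≤ k → (L i).ExactAt k) (j : ℤ) (hj : a + n ≤ j) :
    IsZero ((∏ᶜ L).homology j) := by
  obtain ⟨q, rfl⟩ : ∃ q : ℕ, j = (a - 1) + (q + 1) := ⟨(j - a).toNat, by omega⟩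
  have h1 := hC ι _ (fun i => resolutionOfExact
    ((L i).restriction (ComplexShape.embeddingUpIntGE (a - 1))) (fun k => hI i _) (fun k => by
      rw [HomologicalComplex.exactAt_iff_isZero_homology]
      obtain ⟨e⟩ := restriction_homologyIso (L i) (a - 1) k
      refine IsZero.of_iso ?_ e
      rw [← HomologicalComplex.exactAt_iff_isZero_homology]
      exact hL i _ (by omega))) (q + 1) (by omega)
  obtain ⟨e⟩ := restriction_homologyIso (∏ᶜ L) (a - 1) q
  obtain ⟨e'⟩ := restriction_pi_iso L (a - 1)
  exact (h1.of_iso ((HomologicalComplex.homologyFunctor C _ (q + 1)).mapIso e')).of_iso e.symm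

end Aux3

section Aux4

lemma exists_injective_model (X : DerivedCategory C) (b : ℤ)
    (hX : ∀ k < b, IsZero ((DerivedCategory.homologyFunctor C k).obj X)) :
    ∃ (L : CochainComplex C ℤ) (_ : X ≅ DerivedCategory.Q.obj L), L.IsKInjective ∧
      ∀ k, Injective (L.X k) := by
  have : X.IsGE b := (DerivedCategory.isGE_iff X b).2 hX
  obtain ⟨K, _, ⟨e⟩⟩ := DerivedCategory.exists_iso_Q_obj_of_isGE X b
  obtain ⟨L, i, _, _, _⟩ := CochainComplex.Plus.modelCategoryQuillen.exists_quasiIso_injective K b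
  exact ⟨L, e ≪≫ asIso (DerivedCategory.Q.map i),
    CochainComplex.isKInjective_of_injective L b, inferInstance⟩

/-- A family of bounded below objects. -/
def IsBddBelowFamily {ι : Type} (X : ι → DerivedCategory C) : Prop :=
  ∀ i, ∃ b : ℤ, ∀ k < b, IsZero ((DerivedCategory.homologyFunctor C k).obj (X i))

lemma hasProduct_of_bdd {ι : Type} (X : ι → DerivedCategory C) (hX : IsBddBelowFamily X) :
    HasProduct X := by
  choose b hb using hX
  choose L e hL _ using fun i => exists_injective_model (X i) (b i) (hb i)
  obtain ⟨h⟩ := isLimit_Q_pi L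
  have : HasProduct (fun i => DerivedCategory.Q.obj (L i)) := ⟨⟨_, h⟩⟩
  exact hasLimit_of_iso (Discrete.natIso (fun i => (e i.as).symm) :
    Discrete.functor (fun i => DerivedCategory.Q.obj (L i)) ≅ Discrete.functor X)

lemma isZero_homology_prod (n : ℕ) (hC : AB4StarMinus C n) {ι : Type}
    (X : ι → DerivedCategory C) (hX : IsBddBelowFamily X) [HasProduct X] (a : ℤ)
    (ha : ∀ i k, a ≤ k → IsZero ((DerivedCategory.homologyFunctor C k).obj (X i)))
    (j : ℤ) (hj : a + n ≤ j) :
    IsZero ((DerivedCategory.homologyFunctor C j).obj (∏ᶜ X)) := by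
  choose b hb using hX
  choose L e hL hI using fun i => exists_injective_model (X i) (b i) (hb i)
  obtain ⟨h⟩ := isLimit_Q_pi L
  have : HasProduct (fun i => DerivedCategory.Q.obj (L i)) := ⟨⟨_, h⟩⟩
  let e1 : ∏ᶜ X ≅ ∏ᶜ (fun i => DerivedCategory.Q.obj (L i)) :=
    HasLimit.isoOfNatIso (Discrete.natIso (fun i => e i.as))
  let e2 : ∏ᶜ (fun i => DerivedCategory.Q.obj (L i)) ≅ DerivedCategory.Q.obj (∏ᶜ L) :=
    (limit.isLimit _).conePointUniqueUpToIso h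
  refine IsZero.of_iso ?_ ((DerivedCategory.homologyFunctor C j).mapIso (e1 ≪≫ e2) ≪≫
    (DerivedCategory.homologyFunctorFactors C j).app _)
  refine isZero_homology_pi n hC L hI a (fun i k hk => ?_) j hj
  rw [HomologicalComplex.exactAt_iff_isZero_homology]
  exact (ha i k hk).of_iso (((DerivedCategory.homologyFunctor C k).mapIso (e i) ≪≫
    (DerivedCategory.homologyFunctorFactors C k).app _).symm)

end Aux4

section Aux5

lemma seq_solve {D : Type*} [Category D] [Preadditive D] (m : ℕ) :
    ∀ (X : ℕ → D) (α : ∀ i, X (i + 1) ⟶ X i) (_ : ∀ i, m ≤ i → IsIso (α i))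
      (Z : D) (x₀ : Z ⟶ X m) (y : ∀ i, Z ⟶ X i),
      ∃ x : ∀ i, Z ⟶ X i, x m = x₀ ∧ ∀ i, x i - x (i + 1) ≫ α i = y i := by
  induction m with
  | zero =>
    intro X α hα Z x₀ y
    have : ∀ i, IsIso (α i) := fun i => hα i (Nat.zero_le i)
    refine ⟨fun i => Nat.rec (motive := fun i => Z ⟶ X i) x₀
      (fun i xi => (xi - y i) ≫ inv (α i)) i, rfl, fun i => ?_⟩
    simp
  | succ m ih =>
    intro X α hα Z x₀ y
    obtain ⟨x, h1, h2⟩ := ih (fun i => X (i + 1)) (fun i => α (i + 1))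
      (fun i hi => hα (i + 1) (by omega)) Z x₀ (fun i => y (i + 1))
    refine ⟨fun i => match i with
      | 0 => y 0 + x 0 ≫ α 0
      | i + 1 => x i, h1, fun i => ?_⟩
    cases i with
    | zero => simp
    | succ i => exact h2 i

lemma seq_uniq {D : Type*} [Category D] [Preadditive D] (m : ℕ) :
    ∀ (X : ℕ → D) (α : ∀ i, X (i + 1) ⟶ X i) (_ : ∀ i, m ≤ i → IsIso (α i))
      (Z : D) (x : ∀ i, Z ⟶ X i) (_ : x m = 0) (_ : ∀ i, x i = x (i + 1) ≫ α i),
      ∀ i, x i = 0 := by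
  induction m with
  | zero =>
    intro X α hα Z x h0 h i
    have : ∀ i, IsIso (α i) := fun i => hα i (Nat.zero_le i)
    induction i with
    | zero => exact h0
    | succ i ih =>
      rw [← cancel_mono (α i), ← h, ih, zero_comp]
  | succ m ih =>
    intro X α hα Z x h0 h
    have h2 := ih (fun i => X (i + 1)) (fun i => α (i + 1))
      (fun i hi => hα (i + 1) (by omega)) Z (fun i => x (i + 1)) h0 (fun i => h (i + 1))
    intro i
    cases i with
    | zero => rw [h 0, h2 0, zero_comp]
    | succ i => exact h2 i

/-- The structure of `1 - shift` on the product of an eventually constant system. -/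
lemma exists_splitting {D : Type*} [Category D] [Preadditive D] (m : ℕ)
    (X : ℕ → D) (α : ∀ i, X (i + 1) ⟶ X i) (hα : ∀ i, m ≤ i → IsIso (α i)) [HasProduct X]
    (φ : ∏ᶜ X ⟶ ∏ᶜ X) (hφ : ∀ i, φ ≫ Pi.π X i = Pi.π X i - Pi.π X (i + 1) ≫ α i) :
    ∃ (s : ∏ᶜ X ⟶ ∏ᶜ X) (c : X m ⟶ ∏ᶜ X), s ≫ φ = 𝟙 _ ∧ φ ≫ s + Pi.π X m ≫ c = 𝟙 _ := by
  obtain ⟨x, hx, hx'⟩ := seq_solve m X α hα (∏ᶜ X) 0 (Pi.π X)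
  obtain ⟨z, hz, hz'⟩ := seq_solve m X α hα (X m) (𝟙 _) (fun _ => 0)
  have hs : Pi.lift x ≫ φ = 𝟙 _ := by
    apply Pi.hom_ext
    intro i
    rw [Category.assoc, hφ, Preadditive.comp_sub, Pi.lift_π, ← Category.assoc, Pi.lift_π, hx',
      Category.id_comp]
  refine ⟨Pi.lift x, Pi.lift z, hs, ?_⟩
  rw [← sub_eq_zero]
  have hzφ : Pi.lift z ≫ φ = 0 := by
    apply Pi.hom_ext
    intro i
    rw [Category.assoc, hφ, Preadditive.comp_sub, Pi.lift_π, ← Category.assoc, Pi.lift_π, hz',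
      zero_comp]
  have h0 : (φ ≫ Pi.lift x + Pi.π X m ≫ Pi.lift z - 𝟙 _) ≫ φ = 0 := by
    simp [Preadditive.add_comp, Preadditive.sub_comp, hs, hzφ]
  apply Pi.hom_ext
  intro i
  rw [zero_comp]
  refine seq_uniq m X α hα _ (fun i => _ ≫ Pi.π X i) ?_ ?_ i
  · simp [Preadditive.add_comp, Preadditive.sub_comp, hx, hz]
  · intro i
    have := congrArg (fun u => u ≫ Pi.π X i) h0
    simp only [Category.assoc, hφ, Preadditive.comp_sub, zero_comp] at this
    rw [sub_eq_zero] at this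
    rw [this, Category.assoc]

end Aux5

section Aux6


lemma isZero_homology_obj₃ (T : Triangle (DerivedCategory C)) (hT : T ∈ distTriang _) (j : ℤ)
    (h1 : Epi ((DerivedCategory.homologyFunctor C j).map T.mor₁))
    (h2 : Mono ((DerivedCategory.homologyFunctor C (j + 1)).map T.mor₁)) :
    IsZero ((DerivedCategory.homologyFunctor C j).obj T.obj₃) := by
  have e1 := (DerivedCategory.HomologySequence.epi_homologyMap_mor₁_iff T hT j).1 h1
  have e2 := (DerivedCategory.HomologySequence.mono_homologyMap_mor₁_iff T hT j (j + 1) rfl).1 h2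
  exact (DerivedCategory.HomologySequence.exact₃ T hT j (j + 1) rfl).isZero_of_both_zeros e1 e2

lemma isIso_homology_mor₁ (T : Triangle (DerivedCategory C)) (hT : T ∈ distTriang _) (j : ℤ)
    (h1 : IsZero ((DerivedCategory.homologyFunctor C (j - 1)).obj T.obj₃))
    (h2 : IsZero ((DerivedCategory.homologyFunctor C j).obj T.obj₃)) :
    IsIso ((DerivedCategory.homologyFunctor C j).map T.mor₁) := by
  have e1 := (DerivedCategory.HomologySequence.epi_homologyMap_mor₁_iff T hT j).2
    (h2.eq_of_tgt _ _)
  have e2 := (DerivedCategory.HomologySequence.mono_homologyMap_mor₁_iff T hT (j - 1) j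
    (by omega)).2 (h1.eq_of_src _ _)
  exact isIso_of_mono_of_epi _

end Aux6

section Aux7

/-- If a map of systems is an isomorphism on cohomology in degrees `≥ a`, then the map on products
is an isomorphism in degrees `≥ a + n + 1`. -/
lemma isIso_homology_piMap (n : ℕ) (hC : AB4StarMinus C n)
    (M M' : ℕ → DerivedCategory C) (hM : IsBddBelowFamily M) (hM' : IsBddBelowFamily M')
    [HasProduct M] [HasProduct M'] (t : ∀ i, M i ⟶ M' i) (a : ℤ)
    (ht : ∀ i k, a ≤ k → IsIso ((DerivedCategory.homologyFunctor C k).map (t i)))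
    (j : ℤ) (hj : a + n + 1 ≤ j) :
    IsIso ((DerivedCategory.homologyFunctor C j).map (Limits.Pi.map t)) := by
  choose Z p q hT using fun i => distinguished_cocone_triangle (t i)
  have hZ : IsBddBelowFamily Z := fun i => by
    obtain ⟨b, hb⟩ := hM i
    obtain ⟨b', hb'⟩ := hM' i
    refine ⟨min (b - 1) b', fun k hk => isZero_homology_obj₃ _ (hT i) k ?_ ?_⟩
    · exact (hb' k (by omega)).epi _
    · exact (hb (k + 1) (by omega)).mono _
  have hZ' : ∀ i k, a ≤ k → IsZero ((DerivedCategory.homologyFunctor C k).obj (Z i)) :=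
    fun i k hk => isZero_homology_obj₃ _ (hT i) k
      (by have := ht i k hk; exact IsIso.epi_of_iso ((DerivedCategory.homologyFunctor C k).map (t i)))
      (by have := ht i (k + 1) (by omega); exact IsIso.mono_of_iso ((DerivedCategory.homologyFunctor C (k + 1)).map (t i)))
  have : HasProduct Z := hasProduct_of_bdd Z hZ
  let T := fun i => Triangle.mk (t i) (p i) (q i)
  have i1 : HasProduct (fun i => (T i).obj₁) := ‹HasProduct M›
  have i2 : HasProduct (fun i => (T i).obj₂) := ‹HasProduct M'›
  have i3 : HasProduct (fun i => (T i).obj₃) := ‹HasProduct Z›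
  have i4 : HasProduct (fun i => (T i).obj₁⟦(1 : ℤ)⟧) :=
    ⟨⟨_, isLimitFanMkObjOfIsLimit (shiftFunctor (DerivedCategory C) (1 : ℤ)) M (Pi.π M)
      (productIsProduct M)⟩⟩
  have hP := productTriangle_distinguished T hT
  exact isIso_homology_mor₁ _ hP j
    (isZero_homology_prod n hC Z hZ a hZ' (j - 1) (by omega))
    (isZero_homology_prod n hC Z hZ a hZ' j (by omega))

end Aux7

section Aux8


/-- Comparison of a homotopy limit with the homotopy limit of an eventually constant system. -/
lemma mono_homology_holim (M M' : ℕ → DerivedCategory C) [HasProduct M] [HasProduct M']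
    (α : ∀ i, M (i + 1) ⟶ M i) (α' : ∀ i, M' (i + 1) ⟶ M' i) (t : ∀ i, M i ⟶ M' i)
    (hαt : ∀ i, α i ≫ t i = t (i + 1) ≫ α' i) (m : ℕ) (hα' : ∀ i, m ≤ i → IsIso (α' i)) (k : ℤ)
    (hk : IsIso ((DerivedCategory.homologyFunctor C k).map (Limits.Pi.map t)))
    (hk' : IsIso ((DerivedCategory.homologyFunctor C (k - 1)).map (Limits.Pi.map t)))
    (H : DerivedCategory C) (f : H ⟶ ∏ᶜ M) (h : ∏ᶜ M ⟶ H⟦(1 : ℤ)⟧)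
    (hH : Triangle.mk f (Pi.lift fun i => Pi.π M i - Pi.π M (i + 1) ≫ α i) h ∈
      distTriang (DerivedCategory C)) :
    Mono ((DerivedCategory.homologyFunctor C k).map (f ≫ Pi.π M m ≫ t m)) := by
  obtain ⟨φ, hφ⟩ : ∃ φ, φ = (Pi.lift fun i => Pi.π M i - Pi.π M (i + 1) ≫ α i) := ⟨_, rfl⟩
  rw [← hφ] at hH
  let φ' : ∏ᶜ M' ⟶ ∏ᶜ M' := Pi.lift fun i => Pi.π M' i - Pi.π M' (i + 1) ≫ α' i
  have hφ' : ∀ i, φ' ≫ Pi.π M' i = Pi.π M' i - Pi.π M' (i + 1) ≫ α' i :=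
    fun i => Pi.lift_π _ _
  have comm : φ ≫ Limits.Pi.map t = Limits.Pi.map t ≫ φ' := by
    apply Pi.hom_ext
    intro i
    rw [Category.assoc, Category.assoc, hφ', Pi.map_π, hφ, ← Category.assoc, Pi.lift_π,
      Preadditive.sub_comp, Preadditive.comp_sub, Pi.map_π, Category.assoc, hαt,
      ← Category.assoc (Limits.Pi.map t), Pi.map_π, Category.assoc]
  obtain ⟨s, c, hs, hc⟩ := exists_splitting m M' α' hα' φ' hφ'
  have epi' : Epi ((DerivedCategory.homologyFunctor C (k - 1)).map φ) := by
    have h1 : Epi ((DerivedCategory.homologyFunctor C (k - 1)).map φ') := by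
      have : IsSplitEpi φ' := ⟨⟨⟨s, hs⟩⟩⟩
      infer_instance
    have h2 := congrArg (fun u => (DerivedCategory.homologyFunctor C (k - 1)).map u) comm
    simp only [Functor.map_comp] at h2
    have h3 : Epi ((DerivedCategory.homologyFunctor C (k - 1)).map φ ≫
        (DerivedCategory.homologyFunctor C (k - 1)).map (Limits.Pi.map t)) := by
      rw [h2]; infer_instance
    have h4 : (DerivedCategory.homologyFunctor C (k - 1)).map φ =
      ((DerivedCategory.homologyFunctor C (k - 1)).map φ ≫
        (DerivedCategory.homologyFunctor C (k - 1)).map (Limits.Pi.map t)) ≫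
        inv ((DerivedCategory.homologyFunctor C (k - 1)).map (Limits.Pi.map t)) := by simp
    rw [h4]
    infer_instance
  have monof : Mono ((DerivedCategory.homologyFunctor C k).map f) :=
    (DerivedCategory.HomologySequence.mono_homologyMap_mor₁_iff _ hH (k - 1) k (by omega)).2
      ((DerivedCategory.HomologySequence.epi_homologyMap_mor₂_iff _ hH (k - 1) k (by omega)).1
        epi')
  have ffφ : f ≫ φ = 0 := comp_distTriang_mor_zero₁₂ _ hH
  have e1 : f ≫ Limits.Pi.map t = (f ≫ Pi.π M m ≫ t m) ≫ c := by
    rw [← Category.comp_id (f ≫ Limits.Pi.map t), ← hc, Preadditive.comp_add]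
    simp only [Category.assoc]
    rw [← Category.assoc (Limits.Pi.map t) φ', ← comm, ← Category.assoc, ← Category.assoc f φ, ffφ,
      zero_comp, zero_comp, zero_add, ← Category.assoc (Limits.Pi.map t), Pi.map_π, Category.assoc]
  have e2 := congrArg (fun u => (DerivedCategory.homologyFunctor C k).map u) e1
  simp only [Functor.map_comp _ _ c, Functor.map_comp _ f (Limits.Pi.map t)] at e2
  exact mono_of_mono_fac e2.symm

end Aux8

section Aux9

lemma isIso_map_homOfLE_of_eq {D : Type*} [Category D] (F : ℕᵒᵖ ⥤ D) {a b : ℕ} (h : a ≤ b)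
    (hab : a = b) : IsIso (F.map (homOfLE h).op) := by
  subst hab
  rw [show (homOfLE h).op = 𝟙 _ from Subsingleton.elim _ _, F.map_id]
  infer_instance

end Aux9

theorem isIso_to_holim_truncations_of_ab4StarMinus
    (n : ℕ) (hC : AB4StarMinus C n)
    (N : DerivedCategory C) (M : ℕ → DerivedCategory C)
    (α : ∀ i, M (i + 1) ⟶ M i) (π : ∀ i, N ⟶ M i)
    (hM : IsTruncGESystem N (fun i => -(i : ℤ)) M α π)
    [HasProduct M]
    (H : DerivedCategory C) (f : H ⟶ ∏ᶜ M) (h : ∏ᶜ M ⟶ H⟦(1 : ℤ)⟧)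
    (hH : Triangle.mk f (Pi.lift fun i => Pi.π M i - Pi.π M (i + 1) ≫ α i) h ∈
      distTriang (DerivedCategory C))
    (g : N ⟶ H) (hg : g ≫ f = Pi.lift π) :
    IsIso g := by
  obtain ⟨hπ, hiso, hzero⟩ := hM
  rw [DerivedCategory.isIso_iff]
  intro k
  obtain ⟨m, hm⟩ : ∃ m : ℕ, (n : ℤ) + 2 - k ≤ m := ⟨(n + 2 - k).toNat, by omega⟩
  let F : ℕᵒᵖ ⥤ DerivedCategory C := Functor.ofOpSequence α
  have hFα : ∀ i, F.map (homOfLE (Nat.le_add_right i 1)).op = α i :=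
    Functor.ofOpSequence_map_homOfLE_succ α
  let ν : (Functor.const _).obj N ⟶ F := NatTrans.ofOpSequence (fun i => π i) (fun i => by
    exact (Category.id_comp (π i)).trans ((hπ i).symm.trans
      (congrArg (fun u => π (i + 1) ≫ u) (hFα i).symm)))
  have hν : ∀ {a b : ℕ} (hab : a ≤ b), π b ≫ F.map (homOfLE hab).op = π a := fun hab =>
    (ν.naturality (homOfLE hab).op).symm.trans (Category.id_comp _)
  let M' : ℕ → DerivedCategory C := fun i => M (min i m)
  let t : ∀ i, M i ⟶ M' i := fun i => F.map (homOfLE (min_le_left i m)).op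
  let α' : ∀ i, M' (i + 1) ⟶ M' i := fun i =>
    F.map (homOfLE (min_le_min_right m (Nat.le_add_right i 1))).op
  have hαt : ∀ i, α i ≫ t i = t (i + 1) ≫ α' i := fun i => by
    rw [← hFα]
    exact (F.map_comp _ _).symm.trans ((congrArg F.map (Subsingleton.elim _ _)).trans
      (F.map_comp (homOfLE (min_le_left (i + 1) m)).op
        (homOfLE (min_le_min_right m (Nat.le_add_right i 1))).op))
  have hα' : ∀ i, m ≤ i → IsIso (α' i) := fun i hi =>
    isIso_map_homOfLE_of_eq F _ (by omega)
  have ht : ∀ i k, -(m : ℤ) ≤ k →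
      IsIso ((DerivedCategory.homologyFunctor C k).map (t i)) := fun i k hk => by
    by_cases him : i ≤ m
    · have : IsIso (t i) := isIso_map_homOfLE_of_eq F _ (by omega)
      infer_instance
    · have h1 := hiso i k (by dsimp only; omega)
      have h2 : IsIso ((DerivedCategory.homologyFunctor C k).map (π i ≫ t i)) := by
        rw [show π i ≫ t i = π (min i m) from hν _]
        exact hiso _ k (by dsimp only; omega)
      rw [Functor.map_comp] at h2
      exact IsIso.of_isIso_comp_left ((DerivedCategory.homologyFunctor C k).map (π i)) _
  have bM : IsBddBelowFamily M := fun i => ⟨-(i : ℤ), fun k hk => hzero i k hk⟩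
  have bM' : IsBddBelowFamily M' := fun i => ⟨_, fun k hk => hzero (min i m) k hk⟩
  have : HasProduct M' := hasProduct_of_bdd M' bM'
  have hmono := mono_homology_holim M M' α α' t hαt m hα' k
    (isIso_homology_piMap n hC M M' bM bM' t (-m) ht k (by omega))
    (isIso_homology_piMap n hC M M' bM bM' t (-m) ht (k - 1) (by omega)) H f h hH
  have hcomp : g ≫ (f ≫ Pi.π M m ≫ t m) = π m ≫ t m := by
    rw [← Category.assoc, hg, ← Category.assoc, Pi.lift_π]
  have hi : IsIso ((DerivedCategory.homologyFunctor C k).map (g ≫ (f ≫ Pi.π M m ≫ t m))) := by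
    rw [hcomp, Functor.map_comp]
    have := ht m k (by omega)
    have := hiso m k (by dsimp only; omega)
    infer_instance
  rw [Functor.map_comp] at hi
  have hepi : IsSplitEpi ((DerivedCategory.homologyFunctor C k).map (f ≫ Pi.π M m ≫ t m)) :=
    ⟨⟨⟨inv ((DerivedCategory.homologyFunctor C k).map g ≫
      (DerivedCategory.homologyFunctor C k).map (f ≫ Pi.π M m ≫ t m)) ≫
      (DerivedCategory.homologyFunctor C k).map g, by simp only [Category.assoc]; exact IsIso.inv_hom_id _⟩⟩⟩
  have : IsIso ((DerivedCategory.homologyFunctor C k).map (f ≫ Pi.π M m ≫ t m)) :=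
    isIso_of_mono_of_isSplitEpi _
  exact IsIso.of_isIso_comp_right _
    ((DerivedCategory.homologyFunctor C k).map (f ≫ Pi.π M m ≫ t m))
end

section
/- Let Y be a stack (or scheme) with a finite Zariski open cover Y = V₁ ∪ ⋯ ∪ V_r. For 1 ≤ k ≤ r let U_k be the disjoint union of all k-fold intersections V_{i₁} ∩ ⋯ ∩ V_{i_k} and j_k : U_k → Y the natural map. Assume each pushforward j_{k*} : QC(U_k) → QC(Y) is exact, and each QC(U_k) satisfies AB4*-n_k. Then QC(Y) satisfies AB4*-n for any n ≥ max_k (k + n_k). -/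
/-!
STATEMENT 10 (Lemma 3.2): Let `Y` be a stack (or scheme) with a finite Zariski open cover
`Y = V₁ ∪ ⋯ ∪ V_r`; for `1 ≤ k ≤ r` let `U_k` be the disjoint union of all `k`-fold
intersections and `j_k : U_k → Y` the natural map.  If each `j_{k*} : QC(U_k) → QC(Y)` is
exact and each `QC(U_k)` satisfies AB4*-n_k, then `QC(Y)` satisfies AB4*-n for any
`n ≥ max_k (k + n_k)`.

Since the categories of quasi-coherent sheaves on stacks are not available in Mathlib, this
is formalized faithfully at the categorical level: `A = QC(Y)`, `U k = QC(U_{k+1})`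
(for `k : Fin r`), `jstar k = j_{k+1,*}` (exact, with exact left adjoint `jpull k = j_{k+1}^*`,
as holds for such open covers), and the Čech resolution
`0 → F → C¹(F) → ⋯ → C^r(F) → 0` with `C^p(F) = j_{p*} j_p^* F` is part of the data.
-/

open CategoryTheory Limits

universe v u v' u'

namespace CechAux
open Pretriangulated
attribute [local instance] HasDerivedCategory.standard

section Triang
variable {B : Type u} [Category.{v} B] [Abelian B] {D : Type u'} [Category.{v'} D] [Abelian D]
  (P : B ⥤ D) [P.Additive]

/-- Isomorphisms between K-injectives lift to the homotopy category. -/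
lemma liftIso (I J : CochainComplex B ℤ) [I.IsKInjective] [J.IsKInjective]
    (e : DerivedCategory.Q.obj I ≅ DerivedCategory.Q.obj J) :
    Nonempty ((HomotopyCategory.quotient B (.up ℤ)).obj I ≅
      (HomotopyCategory.quotient B (.up ℤ)).obj J) := by
  have h (I J : CochainComplex B ℤ) [J.IsKInjective] :=
    CochainComplex.IsKInjective.Qh_map_bijective
      ((HomotopyCategory.quotient B (.up ℤ)).obj I) J
  obtain ⟨a, ha⟩ := (h I J).2 e.hom
  obtain ⟨b, hb⟩ := (h J I).2 e.inv
  refine ⟨⟨a, b, (h I I).1 ?_, (h J J).1 ?_⟩⟩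
  · rw [Functor.map_comp, ha, hb]
    exact e.hom_inv_id.trans (DerivedCategory.Qh.map_id _).symm
  · rw [Functor.map_comp, ha, hb]
    exact e.inv_hom_id.trans (DerivedCategory.Qh.map_id _).symm

/-- `q`-th right derived functor of `P` vanishes on `X`. -/
def RV (q : ℤ) (X : B) : Prop :=
  ∀ I : CochainComplex B ℤ, I.IsKInjective →
    Nonempty (DerivedCategory.Q.obj I ≅ (DerivedCategory.singleFunctor B 0).obj X) →
    IsZero (((HomotopyCategory.homologyFunctor D (.up ℤ) 0).shift q).obj
      ((P.mapHomotopyCategory (.up ℤ)).obj ((HomotopyCategory.quotient B (.up ℤ)).obj I)))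

lemma shift_obj_iff (K : CochainComplex D ℤ) (q : ℤ) :
   IsZero (((HomotopyCategory.homologyFunctor D (.up ℤ) 0).shift q).obj
      ((HomotopyCategory.quotient D (.up ℤ)).obj K)) ↔ K.ExactAt q := by
  rw [HomologicalComplex.exactAt_iff_isZero_homology]
  exact ((HomotopyCategory.homologyFunctorFactors D (.up ℤ) q).app K).isZero_iff

lemma RV.of_one {q : ℤ} {X : B} (I : CochainComplex B ℤ) [I.IsKInjective]
    (e : DerivedCategory.Q.obj I ≅ (DerivedCategory.singleFunctor B 0).obj X)
    (h : ((P.mapHomologicalComplex (.up ℤ)).obj I).ExactAt q) : RV P q X := by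
  intro J hJ ⟨f⟩
  obtain ⟨g⟩ := liftIso J I (f ≪≫ e.symm)
  refine IsZero.of_iso ((shift_obj_iff _ q).2 h) ?_
  exact Functor.mapIso _ ((P.mapHomotopyCategory (.up ℤ)).mapIso g)

lemma RV.exactAt {q : ℤ} {X : B} (h : RV P q X) (I : CochainComplex B ℤ) [I.IsKInjective]
    (e : DerivedCategory.Q.obj I ≅ (DerivedCategory.singleFunctor B 0).obj X) :
    ((P.mapHomologicalComplex (.up ℤ)).obj I).ExactAt q :=
  (shift_obj_iff _ q).1 (h I inferInstance ⟨e⟩)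

lemma RV.of_iso {q : ℤ} {X Y : B} (e : X ≅ Y) (h : RV P q X) : RV P q Y := by
  intro I hI ⟨f⟩
  exact h I hI ⟨f ≪≫ (DerivedCategory.singleFunctor B 0).mapIso e.symm⟩

lemma RV.les {q : ℤ} (S : ShortComplex B) (hS : S.ShortExact)
    (I₂ : CochainComplex B ℤ) [I₂.IsKInjective]
    (e₂ : DerivedCategory.Q.obj I₂ ≅ (DerivedCategory.singleFunctor B 0).obj S.X₂)
    (h₂ : RV P (q + 1) S.X₂) (h₃ : RV P q S.X₃) : RV P (q + 1) S.X₁ := by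
  intro I₁ hI₁ ⟨e₁⟩
  obtain ⟨a, ha⟩ := (CochainComplex.IsKInjective.Qh_map_bijective
      ((HomotopyCategory.quotient B (.up ℤ)).obj I₁) I₂).2
      (e₁.hom ≫ (DerivedCategory.singleFunctor B 0).map S.f ≫ e₂.inv)
  obtain ⟨C, g, d, hT⟩ := distinguished_cocone_triangle a
  obtain ⟨I₃, rfl⟩ := HomotopyCategory.quotient_obj_surjective C
  have hI₃ : CochainComplex.IsKInjective I₃ := by
    rw [CochainComplex.isKInjective_iff_rightOrthogonal]
    exact ObjectProperty.ext_of_isTriangulatedClosed₃ _ _ hT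
      (CochainComplex.IsKInjective.rightOrthogonal I₁)
      (CochainComplex.IsKInjective.rightOrthogonal I₂)
  have hT' := DerivedCategory.Qh.map_distinguished _ hT
  have e₃ : Nonempty (DerivedCategory.Q.obj I₃ ≅ (DerivedCategory.singleFunctor B 0).obj S.X₃) := by
    have comm (x : DerivedCategory.Q.obj I₁ ⟶ DerivedCategory.Q.obj I₂)
        (hx : x = e₁.hom ≫ (DerivedCategory.singleFunctor B 0).map S.f ≫ e₂.inv) :
        x ≫ e₂.hom = e₁.hom ≫ (DerivedCategory.singleFunctor B 0).map S.f := by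
      rw [hx]; simp
    let e := isoTriangleOfIso₁₂ _ _ hT' hS.singleTriangle_distinguished e₁ e₂ (comm _ ha)
    exact ⟨Triangle.π₃.mapIso e⟩
  have hT'' := (P.mapHomotopyCategory (.up ℤ)).map_distinguished _ hT
  have := (HomotopyCategory.homologyFunctor D (.up ℤ) 0).homologySequence_exact₁ _ hT'' q (q+1) rfl
  exact this.isZero_X₂ ((h₃ I₃ hI₃ e₃).eq_of_src _ _) ((h₂ I₂ inferInstance ⟨e₂⟩).eq_of_tgt _ _)


instance resKInj {X : B} (R : InjectiveResolution X) : R.cochainComplex.IsKInjective :=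
  CochainComplex.isKInjective_of_injective _ 0

noncomputable def resIso {X : B} (R : InjectiveResolution X) :
    DerivedCategory.Q.obj R.cochainComplex ≅ (DerivedCategory.singleFunctor B 0).obj X :=
  (asIso (DerivedCategory.Q.map R.ι')).symm ≪≫
    ((DerivedCategory.singleFunctorIsoCompQ B 0).app X).symm

lemma exactAt_extend_iff (K : CochainComplex B ℕ) (q : ℕ) :
    ((P.mapHomologicalComplex (.up ℤ)).obj (K.extend ComplexShape.embeddingUpNat)).ExactAt
      ((q + 1 : ℕ) : ℤ) ↔ ((P.mapHomologicalComplex (.up ℕ)).obj K).ExactAt (q + 1) := by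
  rw [HomologicalComplex.exactAt_iff' _ (q : ℤ) ((q + 1 : ℕ) : ℤ) ((q + 2 : ℕ) : ℤ)
      (by simp) (by simp; ring),
    HomologicalComplex.exactAt_iff' _ q (q + 1) (q + 2) (by simp) (by simp)]
  have h (a b : ℕ) (a' b' : ℤ) (ha : ComplexShape.embeddingUpNat.f a = a')
      (hb : ComplexShape.embeddingUpNat.f b = b') :
      P.map (HomologicalComplex.extendXIso K ComplexShape.embeddingUpNat ha).hom ≫
        P.map (K.d a b) =
      P.map ((HomologicalComplex.extend K ComplexShape.embeddingUpNat).d a' b') ≫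
        P.map (HomologicalComplex.extendXIso K ComplexShape.embeddingUpNat hb).hom := by
    rw [HomologicalComplex.extend_d_eq K ComplexShape.embeddingUpNat ha hb, ← P.map_comp,
      ← P.map_comp, Category.assoc, Category.assoc, Iso.inv_hom_id, Category.comp_id]
  exact ShortComplex.exact_iff_of_iso (ShortComplex.isoMk
    (P.mapIso (HomologicalComplex.extendXIso K ComplexShape.embeddingUpNat rfl))
    (P.mapIso (HomologicalComplex.extendXIso K ComplexShape.embeddingUpNat rfl))
    (P.mapIso (HomologicalComplex.extendXIso K ComplexShape.embeddingUpNat rfl))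
    (h q (q + 1) _ _ rfl rfl) (h (q + 1) (q + 2) _ _ rfl rfl))

lemma RV_iff {X : B} (R : InjectiveResolution X) (q : ℕ) : RV P ((q + 1 : ℕ) : ℤ) X ↔
    ((P.mapHomologicalComplex (.up ℕ)).obj R.cocomplex).ExactAt (q + 1) := by
  rw [← exactAt_extend_iff]
  exact ⟨fun h => h.exactAt P R.cochainComplex (resIso R),
    fun h => RV.of_one P R.cochainComplex (resIso R) h⟩

end Triang

section Fam

variable {C : Type u} [Category.{v} C] [Abelian C] {I : Type}

@[simps]
def famCx (K : I → CochainComplex C ℕ) : CochainComplex (Discrete I ⥤ C) ℕ where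
  X n := Discrete.functor fun i => (K i).X n
  d m n := Discrete.natTrans fun i => (K i.as).d m n
  shape m n h := by
    ext ⟨i⟩
    exact (K i).shape m n h
  d_comp_d' m n p _ _ := by
    ext ⟨i⟩
    exact (K i).d_comp_d m n p

lemma injective_fam (J : I → C) [∀ i, Injective (J i)] : Injective (Discrete.functor J) where
  factors {X Y} g f hf := by
    have H (i : I) : ∃ h : Y.obj ⟨i⟩ ⟶ J i, f.app ⟨i⟩ ≫ h = g.app ⟨i⟩ :=
      ⟨Injective.factorThru (J := J i) (g.app ⟨i⟩) (f.app ⟨i⟩), Injective.comp_factorThru _ _⟩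
    choose h hh using H
    refine ⟨Discrete.natTrans fun i => h i.as, ?_⟩
    ext i
    exact hh i.as

lemma qi_congr {K L : CochainComplex C ℕ} {f g : K ⟶ L} (h : f = g)
    (hg : QuasiIso g) : QuasiIso f := h ▸ hg

lemma comp_aux {X Y : C} {f : X ⟶ X} {g h : X ⟶ Y} (hf : f = 𝟙 X) (hg : g = h) : f ≫ g = h := by
  rw [hf, hg, Category.id_comp]

noncomputable def famRes {X : I → C} (R : ∀ i, InjectiveResolution (X i)) :
    InjectiveResolution (Discrete.functor X) where
  cocomplex := famCx fun i => (R i).cocomplex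
  injective n := injective_fam (fun i => (R i).cocomplex.X n)
  ι := (CochainComplex.fromSingle₀Equiv _ _).symm
    ⟨Discrete.natTrans fun i => (R i.as).ι.f 0, by
      ext ⟨i⟩
      exact (R i).ι_f_zero_comp_complex_d⟩
  quasiIso := by
    rw [HomologicalComplex.quasiIso_iff_evaluation]
    rintro ⟨i⟩
    have := (R i).quasiIso
    let F := (evaluation _ C).obj (Discrete.mk i)
    have h0 : ((HomologicalComplex.singleMapHomologicalComplex F (.up ℕ) 0).inv.app
        (Discrete.functor X)).f 0 = 𝟙 (X i) := by
      rw [HomologicalComplex.singleMapHomologicalComplex_inv_app_self,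
        CochainComplex.single₀ObjXSelf, CochainComplex.single₀ObjXSelf]
      exact Category.id_comp _
    refine (quasiIso_iff_comp_left ((HomologicalComplex.singleMapHomologicalComplex F
      (.up ℕ) 0).inv.app (Discrete.functor X)) _).1 ?_
    refine qi_congr (K := (CochainComplex.single₀ C).obj (X i)) (L := (R i).cocomplex) ?_ this
    refine HomologicalComplex.from_single_hom_ext (c := .up ℕ) (j := 0) (A := X i)
      (K := (R i).cocomplex) ?_
    exact comp_aux h0 (congrArg F.map (CochainComplex.fromSingle₀Equiv_symm_apply_f_zero _ _))

noncomputable def mapRes {D : Type u'} [Category.{v'} D] [Abelian D] (F : C ⥤ D) [F.Additive]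
    [PreservesFiniteLimits F] [PreservesFiniteColimits F] (hF : ∀ J, Injective J → Injective (F.obj J))
    {X : C} (R : InjectiveResolution X) :
    InjectiveResolution (F.obj X) where
  cocomplex := (F.mapHomologicalComplex _).obj R.cocomplex
  injective _ := hF _ inferInstance
  ι := ((HomologicalComplex.singleMapHomologicalComplex F (.up ℕ) 0).app X).inv ≫
    (F.mapHomologicalComplex _).map R.ι
  quasiIso := inferInstance

variable [HasProducts.{0} C]

instance : (lim : (Discrete I ⥤ C) ⥤ C).Additive where
  map_add {X Y f g} := by
    refine limit.hom_ext fun j => ?_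
    simp

lemma prod_inv₁ {E D : Type*} [Category* E] [Category* D] (F G : E ⥤ D) (α : F ⟶ G) (K : I → E)
    [HasProduct K] [HasProduct fun i => F.obj (K i)] [HasProduct fun i => G.obj (K i)]
    [PreservesLimit (Discrete.functor K) F] [PreservesLimit (Discrete.functor K) G] :
    (PreservesProduct.iso F K).inv ≫ α.app (∏ᶜ K) =
      Limits.Pi.map (fun i => α.app (K i)) ≫ (PreservesProduct.iso G K).inv := by
  rw [Iso.inv_comp_eq, ← Category.assoc, Iso.eq_comp_inv]
  refine Limits.Pi.hom_ext _ _ fun i => ?_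
  simp

lemma prod_inv₂ {E D : Type*} [Category* E] [Category* D] (F : E ⥤ D) (K L : I → E)
    (φ : ∀ i, K i ⟶ L i)
    [HasProduct K] [HasProduct fun i => F.obj (K i)] [HasProduct L] [HasProduct fun i => F.obj (L i)]
    [PreservesLimit (Discrete.functor K) F] [PreservesLimit (Discrete.functor L) F] :
    (PreservesProduct.iso F K).inv ≫ F.map (Limits.Pi.map φ) =
      Limits.Pi.map (fun i => F.map (φ i)) ≫ (PreservesProduct.iso F L).inv := by
  rw [Iso.inv_comp_eq, ← Category.assoc, Iso.eq_comp_inv]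
  refine Limits.Pi.hom_ext _ _ fun i => ?_
  simp only [PreservesProduct.iso_hom, Category.assoc, piComparison_comp_π, Pi.map_π,
    piComparison_comp_π_assoc, ← F.map_comp]

noncomputable def limIso (K : I → CochainComplex C ℕ) :
    (lim.mapHomologicalComplex (.up ℕ)).obj (famCx K) ≅ ∏ᶜ K :=
  HomologicalComplex.Hom.isoOfComponents
    (fun n => (PreservesProduct.iso (HomologicalComplex.eval C (.up ℕ) n) K).symm)
    (fun m n _ => prod_inv₁ (HomologicalComplex.eval C (.up ℕ) m)
      (HomologicalComplex.eval C (.up ℕ) n) 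
        { app := fun K => K.d m n, naturality := fun _ _ f => f.comm m n } K)

noncomputable def limMapIso {D : Type u'} [Category.{v'} D] [Abelian D] [HasProducts.{0} D]
    (F : C ⥤ D) [F.Additive] [PreservesLimitsOfShape (Discrete I) F] (K : I → CochainComplex C ℕ) :
    (lim.mapHomologicalComplex (.up ℕ)).obj
        (famCx fun i => (F.mapHomologicalComplex _).obj (K i)) ≅
      (F.mapHomologicalComplex _).obj ((lim.mapHomologicalComplex (.up ℕ)).obj (famCx K)) :=
  HomologicalComplex.Hom.isoOfComponents
    (fun n => (PreservesProduct.iso F (fun i => (K i).X n)).symm)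
    (fun m n _ => prod_inv₂ F (fun i => (K i).X m) (fun i => (K i).X n) fun i => (K i).d m n)


/-- The `q`-th derived functor of product vanishes on the family `X`. -/
def PV (q : ℕ) (X : I → C) : Prop :=
  RV (lim : (Discrete I ⥤ C) ⥤ C) (q : ℤ) (Discrete.functor X)

lemma PV_iff {X : I → C} (R : ∀ i, InjectiveResolution (X i)) (q : ℕ) :
    PV (q + 1) X ↔ ((lim.mapHomologicalComplex (.up ℕ)).obj
      (famCx fun i => (R i).cocomplex)).ExactAt (q + 1) :=
  RV_iff _ (famRes R) q

lemma PV_iff' {X : I → C} (R : ∀ i, InjectiveResolution (X i)) (q : ℕ) :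
    PV (q + 1) X ↔ IsZero ((HomologicalComplex.homologyFunctor C (ComplexShape.up ℕ) (q + 1)).obj
      (∏ᶜ fun i => (R i).cocomplex)) := by
  rw [PV_iff R]
  refine Iff.trans ?_ (HomologicalComplex.exactAt_iff_isZero_homology _ _)
  exact ⟨fun h => h.of_iso (limIso _), fun h => h.of_iso (limIso _).symm⟩

lemma PV.of_iso {q : ℕ} {X Y : I → C} (e : ∀ i, X i ≅ Y i) (h : PV q X) : PV q Y :=
  RV.of_iso _ (Discrete.natIso fun i => e i.as) h

lemma PV.of_isZero {q : ℕ} {X : I → C} (hX : ∀ i, IsZero (X i)) : PV (q + 1) X := by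
  have (i : I) : Injective (X i) := (hX i).injective
  rw [PV_iff (fun i => InjectiveResolution.self (X i))]
  refine ShortComplex.exact_of_isZero_X₂ _ ?_
  refine Functor.map_isZero lim (X := (famCx fun i =>
    (InjectiveResolution.self (X i)).cocomplex).X (q + 1)) ?_
  refine Functor.isZero _ ?_
  rintro ⟨i⟩
  exact HomologicalComplex.isZero_single_obj_X (.up ℕ) 0 (X i) (q + 1) (by simp)

lemma PV.les [EnoughInjectives C] {q : ℕ} (S : I → ShortComplex C) (hS : ∀ i, (S i).ShortExact)
    (h₂ : PV (q + 1) fun i => (S i).X₂) (h₃ : PV q fun i => (S i).X₃) :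
    PV (q + 1) fun i => (S i).X₁ := by
  let T : ShortComplex (Discrete I ⥤ C) := 
    { X₁ := Discrete.functor fun i => (S i).X₁
      X₂ := Discrete.functor fun i => (S i).X₂
      X₃ := Discrete.functor fun i => (S i).X₃
      f := Discrete.natTrans fun i => (S i.as).f
      g := Discrete.natTrans fun i => (S i.as).g
      zero := by
        ext ⟨i⟩
        exact (S i).zero }
  have hT : T.ShortExact := 
    { exact := by
        rw [ShortComplex.exact_iff_isZero_homology, Functor.isZero_iff]
        rintro ⟨i⟩
        have := (hS i).exact
        rw [ShortComplex.exact_iff_isZero_homology] at this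
        exact this.of_iso (T.mapHomologyIso ((evaluation _ _).obj ⟨i⟩)).symm
      mono_f := by
        have (j : Discrete I) : Mono (T.f.app j) := (hS j.as).mono_f
        exact NatTrans.mono_of_mono_app _
      epi_g := by
        have (j : Discrete I) : Epi (T.g.app j) := (hS j.as).epi_g
        exact NatTrans.epi_of_epi_app _ }
  have h₂' : RV (lim : (Discrete I ⥤ C) ⥤ C) ((q : ℤ) + 1) T.X₂ := by
    rw [← Nat.cast_one, ← Nat.cast_add]
    exact h₂
  have := RV.les _ T hT _ (resIso (famRes fun i => InjectiveResolution.of (S i).X₂)) h₂' h₃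
  rw [← Nat.cast_one, ← Nat.cast_add] at this
  exact this

lemma PV_map [EnoughInjectives C] {D : Type u'} [Category.{v'} D] [Abelian D] [HasProducts.{0} D]
    (F : C ⥤ D) [PreservesFiniteLimits F] [PreservesFiniteColimits F]
    [PreservesLimitsOfShape (Discrete I) F]
    (hF : ∀ J, Injective J → Injective (F.obj J)) {q : ℕ} {X : I → C} (h : PV (q + 1) X) :
    PV (q + 1) fun i => F.obj (X i) := by
  have : F.Additive := Functor.additive_of_preserves_binary_products F
  let R (i : I) := InjectiveResolution.of (X i)
  rw [PV_iff R] at h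
  rw [PV_iff fun i => mapRes F hF (R i)]
  refine HomologicalComplex.ExactAt.of_iso ?_ (limMapIso F fun i => (R i).cocomplex).symm
  exact ShortComplex.Exact.map h F

end Fam

section Cech
variable {A : Type u} [Category.{v} A] [Abelian A]

noncomputable def cycSES (K : CochainComplex A ℕ) (p : ℕ) : ShortComplex A :=
  ShortComplex.mk (K.iCycles p) (K.toCycles p (p + 1)) (by
    rw [← cancel_mono (K.iCycles _), Category.assoc, K.toCycles_i, K.iCycles_d, zero_comp])

lemma cycSES_shortExact (K : CochainComplex A ℕ) (p : ℕ) (h : K.ExactAt (p + 1)) :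
    (cycSES K p).ShortExact := by
  have hk : (ShortComplex.mk (K.iCycles p) (K.d p (p + 1)) (K.iCycles_d _ _)).Exact :=
    ShortComplex.exact_of_f_is_kernel _ (K.cyclesIsKernel p (p + 1) (by simp))
  refine { exact := ?_, mono_f := ?_, epi_g := ?_ }
  · let φ : cycSES K p ⟶ ShortComplex.mk (K.iCycles p) (K.d p (p + 1)) (K.iCycles_d _ _) :=
      { τ₁ := 𝟙 _, τ₂ := 𝟙 _, τ₃ := K.iCycles _
        comm₁₂ := by simp [cycSES]
        comm₂₃ := by simp [cycSES] }
    have : Epi φ.τ₁ := inferInstanceAs (Epi (𝟙 (K.cycles p)))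
    have : IsIso φ.τ₂ := inferInstanceAs (IsIso (𝟙 (K.X p)))
    have : Mono φ.τ₃ := inferInstanceAs (Mono (K.iCycles (p + 1)))
    exact (ShortComplex.exact_iff_of_epi_of_isIso_of_mono φ).2 hk
  · dsimp [cycSES]; infer_instance
  · rw [HomologicalComplex.exactAt_iff' _ p (p + 1) (p + 2) (by simp) (by simp)] at h
    have e := K.toCycles_cyclesIsoSc'_hom p (p + 1) (p + 2) (by simp) (by simp)
    have he := h.epi_toCycles
    have e' := (Iso.eq_comp_inv _).2 e
    change Epi (K.toCycles p (p + 1))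
    rw [e']
    exact epi_comp' he inferInstance

lemma mono_d01 (K : CochainComplex A ℕ) (h : K.ExactAt 0) : Mono (K.d 0 1) := by
  rw [HomologicalComplex.exactAt_iff' _ 0 0 1 (by simp) (by simp)] at h
  refine h.mono_g ?_
  exact K.shape _ _ (by simp)

noncomputable def cycOneIso (K : CochainComplex A ℕ) (h0 : K.ExactAt 0) (h1 : K.ExactAt 1) :
    K.X 0 ≅ K.cycles 1 := by
  have := (cycSES_shortExact K 0 h1).epi_g
  have : Epi (K.toCycles 0 1) := this
  have := mono_d01 K h0
  have : Mono (K.toCycles 0 1) := by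
    have : Mono (K.toCycles 0 1 ≫ K.iCycles 1) := by rw [K.toCycles_i]; infer_instance
    exact mono_of_mono _ (K.iCycles 1)
  have := isIso_of_mono_of_epi (K.toCycles 0 1)
  exact asIso (K.toCycles 0 1)

lemma cech_main [HasProducts.{0} A] [EnoughInjectives A] {I : Type} (K : I → CochainComplex A ℕ)
    (hK : ∀ i p, (K i).ExactAt p) (r n : ℕ) 
    (hX : ∀ p, 1 ≤ p → p ≤ r → p ≤ n ∧ ∀ q, n < q + p → PV q (fun i => (K i).X p))
    (h0 : ∀ i p, r < p → IsZero ((K i).X p)) (q : ℕ) (hq : n < q) : PV q (fun i => (K i).X 0) := by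
  have T (m : ℕ) : ∀ p, 1 ≤ p → p + m = r + 1 → ∀ q, n + 1 < q + p → 1 ≤ q →
      PV q fun i => (K i).cycles p := by
    induction m with
    | zero =>
      intro p hp1 hp q hq hq1
      obtain ⟨q, rfl⟩ := Nat.exists_eq_add_of_le' hq1
      exact PV.of_isZero fun i => IsZero.of_mono ((K i).iCycles p) (h0 i p (by omega))
    | succ m ih =>
      intro p hp1 hp q hq hq1
      obtain ⟨q, rfl⟩ := Nat.exists_eq_add_of_le' hq1
      have := hX p hp1 (by omega)
      exact PV.les (fun i => cycSES (K i) p) (fun i => cycSES_shortExact (K i) p (hK i _))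
        (this.2 (q + 1) (by omega)) (ih (p + 1) (by omega) (by omega) q (by omega) (by omega))
  exact (T r 1 le_rfl (by omega) q (by omega) (by omega)).of_iso
    fun i => (cycOneIso (K i) (hK i 0) (hK i 1)).symm

end Cech
end CechAux

theorem ab4StarMinus_of_cech_cover
    {A : Type u} [Category.{v} A] [Abelian A] [HasProducts.{0} A] [EnoughInjectives A]
    (r : ℕ) (U : Fin r → Type u') [∀ k, Category.{v'} (U k)] [∀ k, Abelian (U k)]
    [∀ k, HasProducts.{0} (U k)] [∀ k, EnoughInjectives (U k)]
    (jstar : ∀ k, U k ⥤ A) (jpull : ∀ k, A ⥤ U k)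
    (adj : ∀ k, jpull k ⊣ jstar k)
    [∀ k, PreservesFiniteLimits (jpull k)] -- the left adjoints `j_k^*` are exact
    -- hypothesis (i): each `j_{k*}` is exact
    [∀ k, PreservesFiniteLimits (jstar k)] [∀ k, PreservesFiniteColimits (jstar k)]
    -- hypothesis (ii): each `QC(U_k)` is AB4*-n_k
    (nk : Fin r → ℕ) (hU : ∀ k, AB4StarMinus (U k) (nk k))
    -- the Čech resolution `0 → F → C¹(F) → ⋯ → C^r(F) → 0`, `C^p(F) = j_{p*} j_p^* F`
    (cech : ∀ F : A, ∃ K : CochainComplex A ℕ,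
      (∀ i, K.ExactAt i) ∧ Nonempty (K.X 0 ≅ F) ∧
      (∀ p : Fin r, Nonempty (K.X (p + 1) ≅ (jstar p).obj ((jpull p).obj F))) ∧
      (∀ p : ℕ, r < p → IsZero (K.X p)))
    (n : ℕ) (hn : ∀ k : Fin r, (k : ℕ) + 1 + nk k ≤ n) :
    AB4StarMinus A n := by

  intro I F R q hq
  choose K hK e0 eX hz using fun i => cech (F i)
  obtain ⟨q, rfl⟩ := Nat.exists_eq_add_of_le' (show 1 ≤ q by omega)
  rw [← CechAux.PV_iff' R]
  refine CechAux.PV.of_iso (fun i => (e0 i).some) ?_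
  refine CechAux.cech_main K hK r n ?_ hz _ hq
  intro p hp hpr
  obtain ⟨p, rfl⟩ := Nat.exists_eq_add_of_le' hp
  have hnp := hn ⟨p, by omega⟩
  dsimp only at hnp
  refine ⟨by omega, fun q hq => ?_⟩
  obtain ⟨q, rfl⟩ := Nat.exists_eq_add_of_le' (show 1 ≤ q by omega)
  refine CechAux.PV.of_iso (fun i => (eX i ⟨p, by omega⟩).some.symm) ?_
  have := (adj ⟨p, by omega⟩).rightAdjoint_preservesLimits
  refine CechAux.PV_map (jstar ⟨p, by omega⟩) (fun J hJ => (adj _).map_injective J hJ) ?_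
  rw [CechAux.PV_iff' fun i => InjectiveResolution.of _]
  exact hU _ _ _ _ _ (by omega)
end

section
/- Let 𝒞 be a full abelian subcategory of an abelian category ℳ, both with enough injectives, with the inclusion functor exact. Then 𝒞 is a strong Serre subcategory of ℳ (i.e., Ext^i_𝒞(a,b) → Ext^i_ℳ(a,b) is an isomorphism for all i ≥ 0 and all objects a, b of 𝒞) if and only if the natural functor D⁺(𝒞) → D⁺_𝒞(ℳ) is fully faithful. -/
/-!
STATEMENT 14 (Proposition 5.3): Let `𝒞` be a full abelian subcategory of an abelian category
`ℳ`, both with enough injectives, with the inclusion functor `F` exact.  Then `𝒞` is a strong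
Serre subcategory of `ℳ` (i.e. `Ext^i_𝒞(a,b) → Ext^i_ℳ(a,b)` is bijective for all `i ≥ 0` and
all `a, b` in `𝒞`) if and only if the natural functor `D⁺(𝒞) → D⁺_𝒞(ℳ)` is fully faithful.

`Ext^i(a,b)` is identified with `Hom_{D}(a, b[i])`, and the comparison map with the action of
the derived functor `F.mapDerivedCategory` of the exact inclusion.  Since `D⁺_𝒞(ℳ)` is a full
subcategory of `D(ℳ)`, full faithfulness of `D⁺(𝒞) → D⁺_𝒞(ℳ)` is expressed as bijectivity of
`F.mapDerivedCategory` on morphisms between bounded below objects of `D(𝒞)`.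
-/

open CategoryTheory Limits

universe w w' v u v' u'

/-- An object of the derived category is bounded below (lies in `D⁺`) if its cohomology
vanishes in all sufficiently negative degrees. -/
def IsPlus {C : Type u} [Category.{v} C] [Abelian C] [HasDerivedCategory.{w} C]
    (X : DerivedCategory C) : Prop :=
  ∃ t : ℤ, ∀ k < t, IsZero ((DerivedCategory.homologyFunctor C k).obj X)

/-- `𝒞` is a strong Serre subcategory of `ℳ` via the exact inclusion `F`: for all `a b : 𝒞`
and `i ≥ 0`, the natural map `Ext^i_𝒞(a,b) → Ext^i_ℳ(a,b)` — identified with the action of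
the derived functor of `F` on `Hom_{D(𝒞)}(a, b[i])` — is bijective. -/
def IsStrongSerre {C : Type u} [Category.{v} C] [Abelian C] [HasDerivedCategory.{w} C]
    {M : Type u'} [Category.{v'} M] [Abelian M] [HasDerivedCategory.{w'} M]
    (F : C ⥤ M) [F.Additive] [PreservesFiniteLimits F] [PreservesFiniteColimits F] : Prop :=
  ∀ (a b : C) (i : ℕ),
    Function.Bijective (fun f : ((DerivedCategory.singleFunctor C 0).obj a ⟶
        ((DerivedCategory.singleFunctor C 0).obj b)⟦(i : ℤ)⟧) => F.mapDerivedCategory.map f)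

section Helpers

set_option linter.unusedSectionVars false

open Abelian CochainComplex HomComplex

variable {C : Type u} [Category.{v} C] [Abelian C]
  {M : Type u'} [Category.{v'} M] [Abelian M] [HasExt.{w'} M]
  (F : C ⥤ M) [F.Additive] [PreservesFiniteLimits F] [PreservesFiniteColimits F]

/-- `W` is acyclic for all the functors `Hom(F a, -)`. -/
def RelInj (W : M) : Prop :=
  ∀ (a : C) (n : ℕ) (e : Ext.{w'} (F.obj a) W (n + 1)), e = 0

variable {F}

lemma RelInj.of_isZero {W : M} (hW : IsZero W) : RelInj F W := by
  intro a n e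
  have : Injective W := ⟨fun _ _ _ ↦ ⟨0, hW.eq_of_tgt _ _⟩⟩
  exact e.eq_zero_of_injective

lemma RelInj.of_injective {W : M} [Injective W] : RelInj F W :=
  fun _ _ e ↦ e.eq_zero_of_injective

lemma RelInj.quotient {S : ShortComplex M} (hS : S.ShortExact)
    (h₁ : RelInj F S.X₁) (h₂ : RelInj F S.X₂) : RelInj F S.X₃ := by
  intro a n e
  obtain ⟨x, rfl⟩ := Ext.covariant_sequence_exact₃ _ hS e rfl (h₁ _ _ _)
  rw [h₂ _ _ x, Ext.zero_comp]

lemma RelInj.lift {S : ShortComplex M} (hS : S.ShortExact)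
    (h₁ : RelInj F S.X₁) {a : C} (f : F.obj a ⟶ S.X₃) :
    ∃ g : F.obj a ⟶ S.X₂, g ≫ S.g = f := by
  obtain ⟨x, hx⟩ := Ext.covariant_sequence_exact₃ _ hS (Ext.mk₀ f) (zero_add 1) (h₁ _ _ _)
  obtain ⟨g, rfl⟩ := (Ext.mk₀_bijective _ _).2 x
  refine ⟨g, (Ext.mk₀_bijective _ _).1 ?_⟩
  rw [← hx, Ext.mk₀_comp_mk₀]

lemma RelInj.extend {W : M} (hW : RelInj F W) {a b : C} (i : a ⟶ b) [Mono i]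
    (f : F.obj a ⟶ W) : ∃ g : F.obj b ⟶ W, F.map i ≫ g = f := by
  let S := ShortComplex.mk _ _ (cokernel.condition i)
  have hS : S.ShortExact := { exact := ShortComplex.exact_cokernel i }
  have hS' := hS.map_of_exact F
  obtain ⟨x, hx⟩ := Ext.contravariant_sequence_exact₁ hS' _ (Ext.mk₀ f) (add_zero 1) (hW _ _ _)
  obtain ⟨g, rfl⟩ := (Ext.mk₀_bijective _ _).2 x
  refine ⟨g, (Ext.mk₀_bijective _ _).1 ?_⟩
  exact (Ext.mk₀_comp_mk₀ (S.map F).f g).symm.trans hx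

lemma RelInj.of_decomp {W A B : M} (hA : RelInj F A) (hB : RelInj F B)
    (p : W ⟶ A) (i : A ⟶ W) (q : W ⟶ B) (j : B ⟶ W) (h : p ≫ i + q ≫ j = 𝟙 W) :
    RelInj F W := by
  intro a n e
  rw [← e.comp_mk₀_id, ← h, Ext.mk₀_add, Ext.comp_add, ← Ext.mk₀_comp_mk₀, ← Ext.mk₀_comp_mk₀,
    ← Ext.comp_assoc_of_third_deg_zero, ← Ext.comp_assoc_of_third_deg_zero,
    hA _ _ (e.comp _ _), hB _ _ (e.comp _ _)]
  simp

/-- short exact sequence of cycles for an acyclic complex -/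
lemma cycles_shortExact (Z : CochainComplex M ℤ) (p q : ℤ) (hpq : p + 1 = q)
    (hZ : Z.ExactAt q) :
    (ShortComplex.mk (Z.iCycles p) (Z.toCycles p q) (by
      rw [← cancel_mono (Z.iCycles q)]; simp)).ShortExact := by
  have hm : Mono (Z.iCycles p) := inferInstance
  have he : Epi (Z.toCycles p q) := by
    rw [Z.exactAt_iff' p q (q + 1) (by simp; lia) (by simp)] at hZ
    rw [epi_iff_surjective_up_to_refinements]
    intro A x
    obtain ⟨A', π, hπ, (x₁ : A' ⟶ Z.X p), hx₁⟩ :=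
      hZ.exact_up_to_refinements (x ≫ Z.iCycles q) (by
        change (x ≫ Z.iCycles q) ≫ Z.d q (q + 1) = 0
        rw [Category.assoc, Z.iCycles_d, comp_zero])
    replace hx₁ : π ≫ x ≫ Z.iCycles q = x₁ ≫ Z.d p q := hx₁
    refine ⟨A', π, hπ, x₁, ?_⟩
    rw [← cancel_mono (Z.iCycles q)]
    rw [Category.assoc, Category.assoc, Z.toCycles_i, hx₁]
  refine { exact := ?_, mono_f := hm, epi_g := he }
  rw [ShortComplex.exact_iff_exact_up_to_refinements]
  intro A x hx
  dsimp at x hx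
  have hx' : x ≫ Z.d p q = 0 := by
    rw [← Z.toCycles_i, reassoc_of% hx, zero_comp]
  exact ⟨A, 𝟙 A, inferInstance, Z.liftCycles x q (by simp [hpq]) hx', by simp⟩

lemma RelInj.cycles (Z : CochainComplex M ℤ) (n : ℤ) [Z.IsStrictlyGE n] (hZ : Z.Acyclic)
    (h : ∀ p, RelInj F (Z.X p)) (p : ℤ) : RelInj F (Z.cycles p) := by
  have key : ∀ k : ℕ, RelInj F (Z.cycles (n - 1 + k)) := by
    intro k
    induction k with
    | zero =>
      refine .of_isZero (IsZero.of_mono (Z.iCycles _) (Z.isZero_of_isStrictlyGE n _ (by simp)))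
    | succ k hk =>
      exact RelInj.quotient (cycles_shortExact Z (n - 1 + k) _ (by simp; ring) (hZ _)) hk (h _)
  by_cases hp : p < n
  · exact .of_isZero (IsZero.of_mono (Z.iCycles _) (Z.isZero_of_isStrictlyGE n _ hp))
  · have := key (p - (n - 1)).toNat
    rwa [show n - 1 + ((p - (n - 1)).toNat : ℤ) = p by lia] at this

lemma relInj_step (K : CochainComplex C ℤ) (Z : CochainComplex M ℤ)
    (p q : ℤ) (hpq : p + 1 = q) (fq : F.obj (K.X q) ⟶ Z.X q)
    (fq1 : F.obj (K.X (q + 1)) ⟶ Z.X (q + 1))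
    (hfq : fq ≫ Z.d q (q + 1) = F.map (K.d q (q + 1)) ≫ fq1)
    (hZ : Z.ExactAt q)
    (hX : RelInj F (Z.X p)) (hc : RelInj F (Z.cycles p))
    (w : F.obj (K.X p) ⟶ Z.X p)
    (hw₁ : w ≫ Z.d p q = F.map (K.d p q) ≫ fq)
    (hw₂ : ∀ (T : C) (t : T ⟶ K.X p), t ≫ K.d p q = 0 → F.map t ≫ w = 0) :
    ∃ h : F.obj (K.X q) ⟶ Z.X p, F.map (K.d p q) ≫ h = w ∧
      ∀ (T : C) (t : T ⟶ K.X q), t ≫ K.d q (q + 1) = 0 →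
        F.map t ≫ (fq - h ≫ Z.d p q) = 0 := by
  obtain ⟨i, hi, hid⟩ : ∃ i : K.cycles q ⟶ K.X q, Mono i ∧ i = K.iCycles q :=
    ⟨_, inferInstance, rfl⟩
  obtain ⟨c, hci⟩ : ∃ c : K.X p ⟶ K.cycles q, c ≫ i = K.d p q :=
    ⟨K.toCycles p q, by rw [hid, K.toCycles_i]⟩
  obtain ⟨B, e, j, he, hj, hej⟩ : ∃ (B : C) (e : K.X p ⟶ B) (j : B ⟶ K.cycles q),
      Epi e ∧ Mono j ∧ e ≫ j = c :=
    ⟨Limits.image c, Limits.factorThruImage c, Limits.image.ι c, inferInstance, inferInstance,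
      Limits.image.fac c⟩
  have hid' : i ≫ K.d q (q + 1) = 0 := by rw [hid, K.iCycles_d]
  -- the map `g` on the boundaries
  obtain ⟨g, hg⟩ : ∃ g : F.obj B ⟶ Z.X p, F.map e ≫ g = w := by
    let S := ShortComplex.mk _ _ (kernel.condition e)
    have hS : S.ShortExact := { exact := ShortComplex.exact_kernel e }
    have hS' := hS.map_of_exact F
    have : Epi (S.map F).g := hS'.epi_g
    have h0 : (S.map F).f ≫ w = 0 := by
      refine hw₂ _ (kernel.ι e) ?_
      rw [← hci, ← hej, Category.assoc, kernel.condition_assoc, zero_comp]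
    exact ⟨hS'.exact.desc w h0, hS'.exact.g_desc w h0⟩
  have hF : Epi (F.map e) := inferInstance
  -- the map `u` on cycles
  have hse := cycles_shortExact Z p q hpq hZ
  obtain ⟨u, hu⟩ : ∃ u : F.obj (K.cycles q) ⟶ Z.X p, u ≫ Z.d p q = F.map i ≫ fq := by
    have h0 : (F.map i ≫ fq) ≫ Z.d q (q + 1) = 0 := by
      rw [Category.assoc, hfq, ← F.map_comp_assoc, hid', F.map_zero, zero_comp]
    obtain ⟨u, hu⟩ := RelInj.lift hse hc (Z.liftCycles (F.map i ≫ fq) (q + 1) (by simp) h0)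
    refine ⟨u, ?_⟩
    rw [← Z.toCycles_i]
    replace hu := hu =≫ Z.iCycles q
    simpa using hu
  obtain ⟨v, hv⟩ : ∃ v : F.obj (K.cycles q) ⟶ Z.cycles p,
      F.map j ≫ v ≫ Z.iCycles p = F.map j ≫ u - g := by
    have h0 : (F.map j ≫ u - g) ≫ Z.d p q = 0 := by
      rw [← cancel_epi (F.map e), Preadditive.sub_comp, Preadditive.comp_sub, comp_zero,
        reassoc_of% hg, hw₁, Category.assoc, hu, ← F.map_comp_assoc, hej, ← F.map_comp_assoc,
        hci, sub_self]
    obtain ⟨v, hv⟩ := hc.extend j (Z.liftCycles _ q (by simp [hpq]) h0)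
    refine ⟨v, ?_⟩
    rw [reassoc_of% hv, Z.liftCycles_i]
  obtain ⟨h, hh⟩ := hX.extend i (u - v ≫ Z.iCycles p)
  refine ⟨h, ?_, fun T t ht ↦ ?_⟩
  · rw [← hci, F.map_comp, Category.assoc, hh, ← hej, F.map_comp, Category.assoc,
      Preadditive.comp_sub, hv, sub_sub_cancel, hg]
  · obtain ⟨t', rfl⟩ : ∃ t' : T ⟶ K.cycles q, t' ≫ i = t :=
      ⟨K.liftCycles t (q + 1) (by simp) ht, by rw [hid]; exact K.liftCycles_i ..⟩
    rw [F.map_comp, Category.assoc, Preadditive.comp_sub, reassoc_of% hh,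
      Preadditive.sub_comp, hu, Category.assoc, Z.iCycles_d, comp_zero, sub_zero, sub_self,
      comp_zero]

variable (F) in
/-- The morphism `w` vanishes on the cycles of `K` in degree `p`. -/
def Kills (K : CochainComplex C ℤ) (p : ℤ) {W : M}
    (w : ((F.mapHomologicalComplex (.up ℤ)).obj K).X p ⟶ W) : Prop :=
  ∀ (T : C) (t : T ⟶ K.X p), t ≫ K.d p (p + 1) = 0 →
    F.map t ≫ (show F.obj (K.X p) ⟶ W from w) = 0

lemma Kills.step (K : CochainComplex C ℤ) (Z : CochainComplex M ℤ)
    (f : (F.mapHomologicalComplex (.up ℤ)).obj K ⟶ Z)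
    (p q : ℤ) (hpq : p + 1 = q) (hZ : Z.ExactAt q)
    (hX : RelInj F (Z.X p)) (hc : RelInj F (Z.cycles p))
    (w : ((F.mapHomologicalComplex (.up ℤ)).obj K).X p ⟶ Z.X p)
    (hw₁ : w ≫ Z.d p q = f.f p ≫ Z.d p q)
    (hw₂ : Kills F K p w) :
    ∃ h : ((F.mapHomologicalComplex (.up ℤ)).obj K).X q ⟶ Z.X p,
      ((F.mapHomologicalComplex (.up ℤ)).obj K).d p q ≫ h = w ∧
      Kills F K q (f.f q - h ≫ Z.d p q) := by
  subst hpq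
  exact relInj_step K Z p (p + 1) rfl (f.f (p + 1)) (f.f (p + 1 + 1)) (f.comm _ _) hZ hX hc w
    (hw₁.trans (f.comm _ _)) hw₂

lemma Kills.of_mono (K : CochainComplex C ℤ) (Z : CochainComplex M ℤ)
    (f : (F.mapHomologicalComplex (.up ℤ)).obj K ⟶ Z) (p : ℤ) [Mono (Z.d p (p + 1))]
    (w : ((F.mapHomologicalComplex (.up ℤ)).obj K).X p ⟶ Z.X p)
    (hw : w ≫ Z.d p (p + 1) = f.f p ≫ Z.d p (p + 1)) : Kills F K p w := by
  intro T t ht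
  rw [← cancel_mono (Z.d p (p + 1))]
  have h1 : (show F.obj (K.X p) ⟶ _ from w) ≫ Z.d p (p + 1) =
    F.map (K.d p (p + 1)) ≫ (show F.obj (K.X (p + 1)) ⟶ _ from f.f (p + 1)) :=
      hw.trans (f.comm _ _)
  rw [Category.assoc, h1, ← F.map_comp_assoc, ht, F.map_zero, zero_comp, zero_comp]

open Cochain.InductionUp in
lemma relInj_homotopy_zero (K : CochainComplex C ℤ) (Z : CochainComplex M ℤ) (d : ℤ)
    [Z.IsStrictlyGE d] (hZ : Z.Acyclic) (hX : ∀ p, RelInj F (Z.X p))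
    (f : (F.mapHomologicalComplex (.up ℤ)).obj K ⟶ Z) : Nonempty (Homotopy f 0) := by
  let X (n : ℕ) : Set (Cochain ((F.mapHomologicalComplex (.up ℤ)).obj K) Z (-1)) :=
    Set.ofPred (fun α => (δ (-1) 0 α).EqUpTo (Cochain.ofHom f) (n + d - 1) ∧
      ∀ (p q : ℤ) (hpq : p + (-1) = q), p = n + d →
        Kills F K p (f.f p - α.v p q hpq ≫ Z.d q p))
  let x₀ : X 0 := ⟨0, fun p q hpq hp ↦
      IsZero.eq_of_tgt (Z.isZero_of_isStrictlyGE d _ (by omega)) _ _, by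
    intro p q hpq hp
    have hmono : Mono (Z.d p (p + 1)) := by
      have := hZ p
      rw [Z.exactAt_iff' q p (p + 1) (by simp; omega) (by simp)] at this
      exact this.mono_g (IsZero.eq_of_src (Z.isZero_of_isStrictlyGE d _ (by omega)) _ _)
    exact Kills.of_mono K Z f p _ (by simp)⟩
  have step (n : ℕ) (α : X n) :
      ∃ h : ((F.mapHomologicalComplex (.up ℤ)).obj K).X (n + d + 1) ⟶ Z.X (n + d),
      (α.1 + Cochain.single (h - α.1.v _ _ (by omega)) (-1)) ∈ X (n + 1) := by
    obtain ⟨α, hα₁, hα₂⟩ := α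
    obtain ⟨h, hh₁, hh₂⟩ := Kills.step K Z f (n + d) (n + d + 1) rfl (hZ _) (hX _)
      (RelInj.cycles Z d hZ hX _) (f.f (n + d) - α.v (n + d) (n + d - 1) (by omega) ≫ Z.d _ _)
      (by rw [Preadditive.sub_comp, Category.assoc, Z.d_comp_d, comp_zero, sub_zero])
      (hα₂ _ _ _ rfl)
    refine ⟨h, ?_, ?_⟩
    · intro p q hpq hp
      obtain rfl : p = q := by omega
      obtain hp | hp : p ≤ n + d - 1 ∨ p = n + d := by omega
      · rw [δ_add, Cochain.add_v, hα₁ p p (by omega) (by omega), add_eq_left,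
          δ_v (-1) 0 (neg_add_cancel 1) _ p p hpq (p - 1) (p + 1) rfl rfl,
          Cochain.single_v_eq_zero _ _ _ _ _ (by omega),
          Cochain.single_v_eq_zero _ _ _ _ _ (by omega), zero_comp, comp_zero, smul_zero, add_zero]
      · subst hp
        rw [δ_v (-1) 0 (neg_add_cancel 1) _ _ _ hpq (n + d - 1) (n + d + 1) (by omega) (by omega),
          Cochain.add_v, Cochain.add_v, Cochain.single_v_eq_zero _ _ _ _ _ (by omega),
          Cochain.single_v, add_sub_cancel, hh₁]
        simp
    · intro p q hpq hp
      obtain rfl : p = n + d + 1 := by rw [hp]; push_cast; ring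
      obtain rfl : q = n + d := by omega
      rw [Cochain.add_v, Cochain.single_v, add_sub_cancel]
      exact hh₂
  choose h hh using step
  let φ (n : ℕ) (α : X n) : X (n + 1) := ⟨_, hh n α⟩
  have hφ (k : ℕ) (x : X k) : (φ k x).1.EqUpTo x.1 (d + k) := fun p q hpq hp => by
    dsimp [φ]
    rw [add_eq_left, Cochain.single_v_eq_zero _ _ _ _ _ (by omega)]
  refine ⟨(Cochain.equivHomotopy f 0).symm ⟨limitSequence φ hφ x₀, ?_⟩⟩
  rw [Cochain.ofHom_zero, add_zero]
  ext n
  let k₀ := (n - d + 1).toNat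
  rw [← (sequence φ x₀ k₀).2.1 n n (add_zero n) (by omega),
    δ_v (-1) 0 (neg_add_cancel 1) _ n n (by omega) (n - 1) (n + 1) rfl (by omega),
    δ_v (-1) 0 (neg_add_cancel 1) _ n n (by omega) (n - 1) (n + 1) rfl (by omega),
    limitSequence_eqUpTo φ hφ x₀ k₀ n (n - 1) (by omega) (by omega),
    limitSequence_eqUpTo φ hφ x₀ k₀ (n + 1) n (by omega) (by omega)]

variable [HasDerivedCategory.{w} C] [HasDerivedCategory.{w'} M]

lemma relInj_of_isStrongSerre (h : IsStrongSerre F) (I : C) [Injective I] :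
    RelInj F (F.obj I) := by
  intro a n e
  have : HasExt.{w} C := hasExt_of_hasDerivedCategory C
  let y : F.mapDerivedCategory.obj ((DerivedCategory.singleFunctor C 0).obj a) ⟶
      F.mapDerivedCategory.obj (((DerivedCategory.singleFunctor C 0).obj I)⟦((n + 1 : ℕ) : ℤ)⟧) :=
    (F.mapDerivedCategorySingleFunctor 0).hom.app a ≫ e.hom ≫
      ((F.mapDerivedCategorySingleFunctor 0).inv.app I)⟦((n + 1 : ℕ) : ℤ)⟧' ≫
      (F.mapDerivedCategory.commShiftIso ((n + 1 : ℕ) : ℤ)).inv.app _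
  obtain ⟨g, hg⟩ := (h a I (n + 1)).2 y
  dsimp only at hg
  have hg0 : g = 0 := by
    have h1 : Ext.homEquiv.symm g = 0 := Ext.eq_zero_of_injective _
    rw [← Ext.homEquiv.apply_symm_apply g, h1]
    exact Ext.zero_hom ..
  rw [hg0, Functor.map_zero] at hg
  have he : e.hom = 0 := by
    have h2 := hg.symm
    dsimp only [y] at h2
    rw [← cancel_epi ((F.mapDerivedCategorySingleFunctor 0).hom.app a),
      ← cancel_mono (((F.mapDerivedCategorySingleFunctor 0).inv.app I)⟦((n + 1 : ℕ) : ℤ)⟧'),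
      ← cancel_mono ((F.mapDerivedCategory.commShiftIso ((n + 1 : ℕ) : ℤ)).inv.app _)]
    simp only [Category.assoc, comp_zero, zero_comp]
    exact h2
  apply Ext.ext
  rw [he, Ext.zero_hom]

/-- the homotopy category statement -/
lemma homotopy_map_zero (K : HomotopyCategory C (.up ℤ)) (Z : CochainComplex M ℤ) (d : ℤ)
    [Z.IsStrictlyGE d] (hZ : Z.Acyclic) (hX : ∀ p, RelInj F (Z.X p))
    (f : (F.mapHomotopyCategory (.up ℤ)).obj K ⟶ (HomotopyCategory.quotient _ _).obj Z) :
    f = 0 := by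
  obtain ⟨K, rfl⟩ := HomotopyCategory.quotient_obj_surjective K
  obtain ⟨f, rfl⟩ := (HomotopyCategory.quotient _ _).map_surjective
    (X := (F.mapHomologicalComplex (.up ℤ)).obj K) (Y := Z) f
  obtain ⟨h⟩ := relInj_homotopy_zero K Z d hZ hX f
  rw [HomotopyCategory.eq_of_homotopy f 0 h, Functor.map_zero]
  rfl

lemma mappingCone_acyclic {K L : CochainComplex M ℤ} (φ : K ⟶ L) [QuasiIso φ] :
    (mappingCone φ).Acyclic := by
  rw [← HomotopyCategory.quotient_obj_mem_subcategoryAcyclic_iff_acyclic]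
  have h := HomotopyCategory.mappingCone_triangleh_distinguished φ
  have := ((HomotopyCategory.subcategoryAcyclic M).trW_iff_of_distinguished _ h).1 (by
    rw [← HomotopyCategory.quasiIso_eq_trW_subcategoryAcyclic]
    change HomotopyCategory.quasiIso _ _ ((HomotopyCategory.quotient _ _).map φ)
    rw [HomotopyCategory.quotient_map_mem_quasiIso_iff]
    assumption)
  exact this

lemma postcomp_bijective (X : HomotopyCategory C (.up ℤ)) {K L : CochainComplex M ℤ}
    (φ : K ⟶ L) [QuasiIso φ] (d : ℤ) [K.IsStrictlyGE d] [L.IsStrictlyGE d]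
    (hK : ∀ p, RelInj F (K.X p)) (hL : ∀ p, RelInj F (L.X p)) :
    Function.Bijective (fun (g : (F.mapHomotopyCategory (.up ℤ)).obj X ⟶
      (HomotopyCategory.quotient _ _).obj K) ↦ g ≫ (HomotopyCategory.quotient _ _).map φ) := by
  have hac := mappingCone_acyclic φ
  have hGE : (mappingCone φ).IsStrictlyGE (d - 1) := by
    rw [CochainComplex.isStrictlyGE_iff]
    intro i hi
    rw [mappingCone.isZero_X_iff]
    exact ⟨K.isZero_of_isStrictlyGE d _ (by omega), L.isZero_of_isStrictlyGE d _ (by omega)⟩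
  have hrel (p) : RelInj F ((mappingCone φ).X p) :=
    .of_decomp (hK (p + 1)) (hL p) _ _ _ _ (mappingCone.id_X φ p (p + 1) rfl)
  have hzero (X : HomotopyCategory C (.up ℤ))
    (f : (F.mapHomotopyCategory (.up ℤ)).obj X ⟶
      (HomotopyCategory.quotient _ _).obj (mappingCone φ)) : f = 0 :=
    homotopy_map_zero X _ (d - 1) hac hrel f
  have hT := HomotopyCategory.mappingCone_triangleh_distinguished φ
  constructor
  · intro g₁ g₂ h12
    dsimp only at h12
    rw [← sub_eq_zero]
    have hg : (g₁ - g₂) ≫ (HomotopyCategory.quotient _ _).map φ = 0 := by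
      rw [Preadditive.sub_comp, h12, sub_self]
    generalize g₁ - g₂ = g at hg
    obtain ⟨k, hk⟩ := Pretriangulated.Triangle.coyoneda_exact₁ _ hT (g⟦(1 : ℤ)⟧') (by
      change g⟦(1 : ℤ)⟧' ≫ ((HomotopyCategory.quotient _ _).map φ)⟦(1 : ℤ)⟧' = 0
      rw [← Functor.map_comp, hg, Functor.map_zero])
    have hk0 : k = 0 := by
      rw [← cancel_epi (((F.mapHomotopyCategory (.up ℤ)).commShiftIso (1 : ℤ)).hom.app X),
        comp_zero]
      exact hzero _ _
    apply (CategoryTheory.shiftFunctor (HomotopyCategory M (.up ℤ)) (1 : ℤ)).map_injective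
    rw [Functor.map_zero]
    refine hk.trans ?_
    rw [hk0, zero_comp]
    rfl
  · intro u
    obtain ⟨g, hg⟩ := Pretriangulated.Triangle.coyoneda_exact₂ _ hT u (hzero _ _)
    exact ⟨g, hg.symm⟩


lemma Qh_map_bijective_of_relInj [EnoughInjectives M] (X : HomotopyCategory C (.up ℤ))
    (K : CochainComplex M ℤ) (d : ℤ) [K.IsStrictlyGE d] (hK : ∀ p, RelInj F (K.X p)) :
    Function.Bijective (fun (g : (F.mapHomotopyCategory (.up ℤ)).obj X ⟶
      (HomotopyCategory.quotient _ _).obj K) ↦ DerivedCategory.Qh.map g) := by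
  obtain ⟨L, φ, _, _, _⟩ :=
    CochainComplex.Plus.modelCategoryQuillen.exists_quasiIso_injective K d
  have := CochainComplex.isKInjective_of_injective L d
  have h1 := postcomp_bijective (F := F) X φ d hK (fun _ ↦ .of_injective)
  have h2 := (CochainComplex.IsKInjective.Qh_map_bijective
    ((F.mapHomotopyCategory (.up ℤ)).obj X) L).comp h1
  have hiso : IsIso (DerivedCategory.Qh.map ((HomotopyCategory.quotient _ _).map φ)) := by
    have : QuasiIso φ := inferInstance
    have e := (DerivedCategory.quotientCompQhIso M).hom.naturality φ
    have : IsIso ((HomotopyCategory.quotient M (.up ℤ) ⋙ DerivedCategory.Qh).map φ) := by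
      rw [NatIso.isIso_map_iff (DerivedCategory.quotientCompQhIso M)]
      infer_instance
    exact this
  refine (Function.Bijective.of_comp_iff'
    (f := fun g ↦ g ≫ DerivedCategory.Qh.map ((HomotopyCategory.quotient _ _).map φ)) ?_ _).1 ?_
  · exact ((asIso (DerivedCategory.Qh.map
      ((HomotopyCategory.quotient _ _).map φ))).homToEquiv).bijective
  · convert h2 using 1
    ext g
    simp

lemma mapDerivedCategory_bijective_aux [EnoughInjectives M] [F.Full] [F.Faithful]
    (h : IsStrongSerre F) (X : HomotopyCategory C (.up ℤ))
    (I : CochainComplex C ℤ) (d : ℤ) [I.IsStrictlyGE d] [∀ n, Injective (I.X n)] :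
    Function.Bijective (fun (g : DerivedCategory.Qh.obj X ⟶
      DerivedCategory.Qh.obj ((HomotopyCategory.quotient _ _).obj I)) ↦
        F.mapDerivedCategory.map g) := by
  have := CochainComplex.isKInjective_of_injective I d
  have h0 := CochainComplex.IsKInjective.Qh_map_bijective X I
  have hGE : CochainComplex.IsStrictlyGE ((F.mapHomologicalComplex (.up ℤ)).obj I) d := by
    rw [CochainComplex.isStrictlyGE_iff]
    intro i hi
    exact F.map_isZero (I.isZero_of_isStrictlyGE d _ hi)
  have h1 := Qh_map_bijective_of_relInj (F := F) X
    ((F.mapHomologicalComplex (.up ℤ)).obj I) d (fun p ↦ relInj_of_isStrongSerre h (I.X p))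
  have h2 : Function.Bijective (fun (g : X ⟶ (HomotopyCategory.quotient _ _).obj I) ↦
      (F.mapHomotopyCategory (.up ℤ)).map g) :=
    (Functor.FullyFaithful.ofFullyFaithful (F.mapHomotopyCategory (.up ℤ))).map_bijective _ _
  have h3 := h1.comp h2
  have h4 := (((F.mapDerivedCategoryFactorsh).app X).homCongr
    ((F.mapDerivedCategoryFactorsh).app ((HomotopyCategory.quotient _ _).obj I))).symm.bijective
  refine (Function.Bijective.of_comp_iff _ h0).1 ?_
  refine Eq.mpr (congrArg Function.Bijective (funext fun g ↦ ?_)) (h4.comp h3)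
  have := (F.mapDerivedCategoryFactorsh).hom.naturality g
  change F.mapDerivedCategory.map (DerivedCategory.Qh.map g) =
    (F.mapDerivedCategoryFactorsh).hom.app X ≫
      DerivedCategory.Qh.map ((F.mapHomotopyCategory (.up ℤ)).map g) ≫
        (F.mapDerivedCategoryFactorsh).inv.app _
  rw [← cancel_mono ((F.mapDerivedCategoryFactorsh).hom.app _)]
  simpa using this

lemma mapDerivedCategory_bijective [EnoughInjectives C] [EnoughInjectives M] [F.Full] [F.Faithful]
    (h : IsStrongSerre F) (X Y : DerivedCategory C) (hY : IsPlus Y) :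
    Function.Bijective (fun (g : X ⟶ Y) ↦ F.mapDerivedCategory.map g) := by
  obtain ⟨d, hd⟩ := hY
  have : Y.IsGE d := (DerivedCategory.isGE_iff Y d).2 hd
  obtain ⟨K, _, ⟨e⟩⟩ := DerivedCategory.exists_iso_Q_obj_of_isGE Y d
  obtain ⟨I, φ, _, _, _⟩ :=
    CochainComplex.Plus.modelCategoryQuillen.exists_quasiIso_injective K d
  have eY : Y ≅ DerivedCategory.Qh.obj ((HomotopyCategory.quotient _ _).obj I) :=
    e ≪≫ asIso (DerivedCategory.Q.map φ) ≪≫ ((DerivedCategory.quotientCompQhIso C).app I).symm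
  have eX := (DerivedCategory.Qh.objObjPreimageIso X).symm
  have h1 := mapDerivedCategory_bijective_aux h (DerivedCategory.Qh.objPreimage X) I d
  have h2 := (eX.homCongr eY).bijective
  have h3 := ((F.mapDerivedCategory.mapIso eX).homCongr
    (F.mapDerivedCategory.mapIso eY)).symm.bijective
  convert (h3.comp h1).comp h2 using 1
  ext g
  simp [Iso.homCongr]

end Helpers

theorem isStrongSerre_iff_plus_fully_faithful
    {C : Type u} [Category.{v} C] [Abelian C] [EnoughInjectives C] [HasDerivedCategory.{w} C]
    {M : Type u'} [Category.{v'} M] [Abelian M] [EnoughInjectives M] [HasDerivedCategory.{w'} M]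
    (F : C ⥤ M) [F.Additive] [PreservesFiniteLimits F] [PreservesFiniteColimits F]
    [F.Full] [F.Faithful] :
    IsStrongSerre F ↔
      ∀ X Y : DerivedCategory C, IsPlus X → IsPlus Y →
        Function.Bijective (fun f : X ⟶ Y => F.mapDerivedCategory.map f) := by
  refine ⟨fun h X Y _ hY ↦ ?_, fun h a b i ↦ h _ _ ?_ ?_⟩
  · have : HasExt.{w'} M := hasExt_of_hasDerivedCategory M
    exact mapDerivedCategory_bijective h X Y hY
  · refine ⟨0, (DerivedCategory.isGE_iff _ 0).1 ?_⟩
    infer_instance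
  · refine ⟨-i, (DerivedCategory.isGE_iff _ (-i)).1 ?_⟩
    exact DerivedCategory.TStructure.t.isGE_shift _ 0 i (-i) (by simp)
end

section
/- Let F : 𝒞 → ℳ be an exact fully faithful inclusion of a strong Serre subcategory, where both 𝒞 and ℳ have enough injectives. If F is essentially surjective onto complexes with cohomology in 𝒞 at the level of bounded below derived categories (which follows from 𝒞 having enough injectives), then RF⁺ : D⁺(𝒞) → D⁺_𝒞(ℳ) is an equivalence of categories, with quasi-inverse the restriction of RG⁺, where G is a right adjoint of F. -/
/-!
STATEMENT 15: Let `F : 𝒞 → ℳ` be an exact fully faithful inclusion of a strong Serre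
subcategory, where both `𝒞` and `ℳ` have enough injectives and `F` admits a right adjoint
`G`.  Then `RF⁺ : D⁺(𝒞) → D⁺_𝒞(ℳ)` is an equivalence of categories (with quasi-inverse the
restriction of `RG⁺`).

The equivalence is expressed, for the functor `L = F.mapDerivedCategory` induced on derived
categories by the exact functor `F`, as: `L` is bijective on morphisms between bounded below
objects of `D(𝒞)` (full faithfulness, `D⁺_𝒞(ℳ)` being a full subcategory of `D(ℳ)`), and
every bounded below object of `D(ℳ)` with all cohomology in (the essential image of) `𝒞` is
isomorphic to `L X` for some bounded below `X` (essential surjectivity onto `D⁺_𝒞(ℳ)`); the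
existence of the quasi-inverse, induced by `RG⁺`, follows.
-/

open CategoryTheory Limits

universe w w' v u v' u'

section Aux

open Pretriangulated Triangulated DerivedCategory

variable {C : Type u} [Category.{v} C] [Abelian C] [HasDerivedCategory.{w} C]

lemma isPlus_iff (X : DerivedCategory C) : IsPlus X ↔ ∃ t : ℤ, X.IsGE t := by
  simp only [isGE_iff]
  rfl

lemma exists_single_triangle (X : DerivedCategory C) (t : ℤ) [X.IsGE t] :
    ∃ (a : C) (Y : DerivedCategory C) (_ : Y.IsGE (t + 1)) (f : (singleFunctor C t).obj a ⟶ X)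
      (g : X ⟶ Y) (h : Y ⟶ ((singleFunctor C t).obj a)⟦(1 : ℤ)⟧),
      Triangle.mk f g h ∈ distTriang (DerivedCategory C) := by
  obtain ⟨A, Y, hA, hY, f, g, h, mem⟩ := TStructure.t.exists_triangle X t (t + 1) rfl
  have : A.IsLE t := ⟨hA⟩
  have hY' : Y.IsGE (t + 1) := ⟨hY⟩
  have hX' : X.IsGE t := inferInstance
  have : A.IsGE t := by
    rw [isGE_iff]
    intro i hi
    have ex := HomologySequence.exact₁ _ mem (i - 1) i (by lia)
    refine ex.isZero_X₂ ?_ ?_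
    · exact ((isGE_iff _ _).1 hY' _ (by lia)).eq_of_src _ _
    · exact ((isGE_iff _ _).1 hX' _ (by lia)).eq_of_tgt _ _
  obtain ⟨a, ⟨e⟩⟩ := exists_iso_singleFunctor_obj_of_isGE_of_isLE A t
  refine ⟨a, Y, hY', e.inv ≫ f, g, h ≫ e.hom⟦1⟧', ?_⟩
  refine isomorphic_distinguished _ mem _ ?_
  refine Triangle.isoMk _ _ e.symm (Iso.refl X) (Iso.refl Y) ?_ ?_ ?_
  · change (e.inv ≫ f) ≫ 𝟙 X = e.inv ≫ f
    simp
  · change g ≫ 𝟙 Y = 𝟙 X ≫ g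
    simp
  · change (h ≫ e.hom⟦1⟧') ≫ e.inv⟦1⟧' = 𝟙 Y ≫ h
    simp [← Functor.map_comp]

lemma hom_homology_eq_zero (X : DerivedCategory C) (t : ℤ) [X.IsGE t] (B : C)
    (hB : ∀ f : (singleFunctor C t).obj B ⟶ X, f = 0)
    (g : B ⟶ (homologyFunctor C t).obj X) : g = 0 := by
  obtain ⟨a, Y, hY, f, p, h, mem⟩ := exists_single_triangle X t
  have : IsIso ((homologyFunctor C t).map f) := by
    have h1 : Mono ((homologyFunctor C t).map f) :=
      (HomologySequence.mono_homologyMap_mor₁_iff _ mem (t - 1) t (by lia)).2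
        (((isGE_iff _ _).1 hY _ (by lia)).eq_of_src _ _)
    have h2 : Epi ((homologyFunctor C t).map f) :=
      (HomologySequence.epi_homologyMap_mor₁_iff _ mem t).2
        (((isGE_iff _ _).1 hY _ (by lia)).eq_of_tgt _ _)
    exact isIso_of_mono_of_epi _
  let i := (singleFunctorCompHomologyFunctorIso C t).app a
  let g' : B ⟶ a := g ≫ inv ((homologyFunctor C t).map f) ≫ i.hom
  have h0 := hB ((singleFunctor C t).map g' ≫ f)
  have h1 := congrArg (fun x => (homologyFunctor C t).map x) h0
  simp only [Functor.map_comp, Functor.map_zero] at h1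
  have h2 : (homologyFunctor C t).map ((singleFunctor C t).map g') = 0 := by
    rw [← cancel_mono ((homologyFunctor C t).map f), h1, zero_comp]
  have h3 : g' = 0 := by
    have := (singleFunctorCompHomologyFunctorIso C t).hom.naturality g'
    simp only [Functor.comp_map, h2, zero_comp, Functor.id_map] at this
    rw [← cancel_epi ((singleFunctorCompHomologyFunctorIso C t).hom.app B), ← this, comp_zero]
  have h4 : g = g' ≫ i.inv ≫ (homologyFunctor C t).map f := by simp [g']
  rw [h4, h3, zero_comp]

lemma isZero_of_isZero_homology (X : DerivedCategory C)
    (h : ∀ n, IsZero ((homologyFunctor C n).obj X)) : IsZero X := by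
  have : IsIso (0 : X ⟶ X) := by
    rw [isIso_iff]
    intro n
    exact ⟨0, (h n).eq_of_src _ _, (h n).eq_of_src _ _⟩
  rw [IsZero.iff_id_eq_zero, ← IsIso.hom_inv_id (0 : X ⟶ X), zero_comp]

lemma isZero_of_step (X : DerivedCategory C) (hX : IsPlus X)
    (h : ∀ t : ℤ, X.IsGE t → IsZero ((homologyFunctor C t).obj X)) : IsZero X := by
  obtain ⟨t, ht⟩ := (isPlus_iff X).1 hX
  have key : ∀ k : ℕ, X.IsGE (t + k) := by
    intro k
    induction k with
    | zero => simpa using ht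
    | succ k ih =>
      have h1 := h _ ih
      rw [isGE_iff] at ih ⊢
      intro i hi
      obtain hi | rfl : i < t + k ∨ i = t + k := by push_cast at hi; lia
      · exact ih i hi
      · exact h1
  apply isZero_of_isZero_homology
  intro n
  exact (isGE_iff _ _).1 (key (n + 1 - t).toNat) n (by lia)

lemma isPlus_cone (T : Triangle (DerivedCategory C)) (hT : T ∈ distTriang _)
    (h₁ : IsPlus T.obj₁) (h₂ : IsPlus T.obj₂) : IsPlus T.obj₃ := by
  obtain ⟨t₁, h₁⟩ := h₁
  obtain ⟨t₂, h₂⟩ := h₂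
  refine ⟨min (t₁ - 1) t₂, fun k hk => ?_⟩
  refine (HomologySequence.exact₃ _ hT k (k + 1) (by lia)).isZero_X₂ ?_ ?_
  · exact (h₂ k (by lia)).eq_of_src _ _
  · exact (h₁ (k + 1) (by lia)).eq_of_tgt _ _

end Aux

section Bij

open Pretriangulated Triangulated DerivedCategory

variable {C : Type u} [Category.{v} C] [Abelian C] [HasDerivedCategory.{w} C]
    {M : Type u'} [Category.{v'} M] [Abelian M] [HasDerivedCategory.{w'} M]
    (F : C ⥤ M) [F.Additive] [PreservesFiniteLimits F] [PreservesFiniteColimits F]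

def MapBij (X Y : DerivedCategory C) : Prop :=
  Function.Bijective (fun f : X ⟶ Y => F.mapDerivedCategory.map f)

variable {F}

lemma MapBij.of_iso {X Y X' Y' : DerivedCategory C} (h : MapBij F X Y) (e : X ≅ X') (e' : Y ≅ Y') :
    MapBij F X' Y' := by
  constructor
  · intro f g hfg
    have : e.hom ≫ f ≫ e'.inv = e.hom ≫ g ≫ e'.inv := by
      apply h.1
      dsimp at hfg ⊢
      simp only [Functor.map_comp, hfg]
    simpa using this
  · intro f
    obtain ⟨g, hg⟩ := h.2 (F.mapDerivedCategory.map e.hom ≫ f ≫ F.mapDerivedCategory.map e'.inv)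
    dsimp at hg
    refine ⟨e.inv ≫ g ≫ e'.hom, ?_⟩
    dsimp
    simp only [Functor.map_comp, hg, Category.assoc]
    simp [← Functor.map_comp, ← Functor.map_comp_assoc]

lemma MapBij.of_shift {X Y : DerivedCategory C} (n : ℤ) (h : MapBij F (X⟦n⟧) (Y⟦n⟧)) :
    MapBij F X Y := by
  let L := F.mapDerivedCategory
  constructor
  · intro f g hfg
    apply (shiftFunctor _ n).map_injective
    apply h.1
    dsimp at hfg ⊢
    have h1 := (L.commShiftIso n).hom.naturality f
    have h2 := (L.commShiftIso n).hom.naturality g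
    dsimp [L] at h1 h2
    rw [hfg, ← h2, cancel_mono] at h1
    exact h1
  · intro f
    obtain ⟨g, hg⟩ := h.2 ((L.commShiftIso n).hom.app X ≫ f⟦n⟧' ≫ (L.commShiftIso n).inv.app Y)
    obtain ⟨g, rfl⟩ := (shiftFunctor _ n).map_surjective g
    refine ⟨g, ?_⟩
    apply (shiftFunctor _ n).map_injective
    have h1 := (L.commShiftIso n).hom.naturality g
    dsimp [L] at h1 hg ⊢
    rw [hg] at h1
    simpa using h1.symm

lemma MapBij.five (X : DerivedCategory C) (T : Triangle (DerivedCategory C))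
    (hT : T ∈ distTriang _) (h₀ : MapBij F X (T.obj₃⟦(-1 : ℤ)⟧)) (h₁ : MapBij F X T.obj₁)
    (h₃ : MapBij F X T.obj₃) (h₄ : MapBij F X (T.obj₁⟦(1 : ℤ)⟧)) : MapBij F X T.obj₂ := by
  let L := F.mapDerivedCategory
  have hT' := inv_rot_of_distTriang _ hT
  have hLT := L.map_distinguished _ hT
  have hLT' := L.map_distinguished _ hT'
  constructor
  · intro f f' hff'
    rw [← sub_eq_zero]
    have hf : L.map (f - f') = 0 := by
      rw [Functor.map_sub, sub_eq_zero]; exact hff'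
    generalize f - f' = f at hf
    have h1 : f ≫ T.mor₂ = 0 := h₃.1 (by
      change L.map _ = L.map _
      rw [Functor.map_comp, hf, zero_comp, Functor.map_zero])
    obtain ⟨g, rfl⟩ := Triangle.coyoneda_exact₂ _ hT f h1
    have h2 : L.map g ≫ L.map T.mor₁ = 0 := by rw [← Functor.map_comp, hf]
    obtain ⟨k, hk⟩ := Triangle.coyoneda_exact₂ _ hLT' (L.map g) h2
    obtain ⟨k, rfl⟩ := h₀.2 k
    let m : T.obj₃⟦(-1 : ℤ)⟧ ⟶ T.obj₁ := T.invRotate.mor₁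
    have hm : m ≫ T.mor₁ = 0 := comp_distTriang_mor_zero₁₂ _ hT'
    have hk' : L.map g = L.map k ≫ L.map m := hk
    have h3 : g = k ≫ m := h₁.1 (by
      change L.map _ = L.map _
      rw [Functor.map_comp]
      exact hk')
    rw [h3, Category.assoc, hm, comp_zero]
  · intro f
    obtain ⟨g, hg⟩ := h₃.2 (f ≫ L.map T.mor₂)
    change L.map g = _ at hg
    have h1 : g ≫ T.mor₃ = 0 := h₄.1 (by
      change L.map _ = L.map _
      rw [Functor.map_comp, hg, Category.assoc, ← Functor.map_comp,
        comp_distTriang_mor_zero₂₃ _ hT, Functor.map_zero, comp_zero, Functor.map_zero])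
    obtain ⟨k, rfl⟩ := Triangle.coyoneda_exact₃ _ hT g h1
    have h2 : (f - L.map k) ≫ L.map T.mor₂ = 0 := by
      rw [Preadditive.sub_comp, ← hg, Functor.map_comp, sub_self]
    obtain ⟨l, hl⟩ := Triangle.coyoneda_exact₂ _ hLT _ h2
    obtain ⟨l, rfl⟩ := h₁.2 l
    refine ⟨k + l ≫ T.mor₁, ?_⟩
    change L.map _ = _
    rw [Functor.map_add, Functor.map_comp]
    have hl' : f - L.map k = L.map l ≫ L.map T.mor₁ := hl
    rw [← hl', add_sub_cancel]

variable (F)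

lemma exists_homology_iso (X : DerivedCategory C) (k : ℤ) :
    Nonempty ((homologyFunctor M k).obj (F.mapDerivedCategory.obj X) ≅
      F.obj ((homologyFunctor C k).obj X)) := by
  let K := Q.objPreimage X
  let e : Q.obj K ≅ X := Q.objObjPreimageIso X
  exact ⟨(homologyFunctor M k).mapIso (F.mapDerivedCategory.mapIso e.symm ≪≫
      F.mapDerivedCategoryFactors.app K) ≪≫ (homologyFunctorFactors M k).app _ ≪≫
      (K.sc k).mapHomologyIso F ≪≫ F.mapIso ((homologyFunctorFactors C k).symm.app K ≪≫
        (homologyFunctor C k).mapIso e)⟩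

lemma isGE_map (X : DerivedCategory C) (t : ℤ) (h : X.IsGE t) :
    (F.mapDerivedCategory.obj X).IsGE t := by
  rw [isGE_iff] at h ⊢
  intro i hi
  exact IsZero.of_iso (F.map_isZero (h i hi)) (exists_homology_iso F X i).some

lemma isLE_map (X : DerivedCategory C) (t : ℤ) (h : X.IsLE t) :
    (F.mapDerivedCategory.obj X).IsLE t := by
  rw [isLE_iff] at h ⊢
  intro i hi
  exact IsZero.of_iso (F.map_isZero (h i hi)) (exists_homology_iso F X i).some

lemma isPlus_map (X : DerivedCategory C) (h : IsPlus X) : IsPlus (F.mapDerivedCategory.obj X) := by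
  rw [isPlus_iff] at h ⊢
  obtain ⟨t, ht⟩ := h
  exact ⟨t, isGE_map F X t ht⟩

lemma mapBij_of_lt (X Y : DerivedCategory C) (n t : ℤ) (hX : X.IsLE n) (hY : Y.IsGE t)
    (h : n < t) : MapBij F X Y := by
  have := isLE_map F X n hX
  have := isGE_map F Y t hY
  constructor
  · intro f g _
    rw [TStructure.t.zero f n t, TStructure.t.zero g n t]
  · intro f
    refine ⟨0, ?_⟩
    dsimp
    rw [TStructure.t.zero f n t, Functor.map_zero]

variable {F} in
lemma mapBij_single_single (hF : IsStrongSerre F) (a b : C) (n t : ℤ) :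
    MapBij F ((singleFunctor C n).obj a) ((singleFunctor C t).obj b) := by
  by_cases hnt : n < t
  · exact mapBij_of_lt F _ _ n t inferInstance inferInstance hnt
  obtain ⟨i, hi⟩ : ∃ i : ℕ, (i : ℤ) = n - t := ⟨(n - t).toNat, by lia⟩
  have h : MapBij F _ _ := hF a b i
  apply MapBij.of_shift n
  refine h.of_iso (((singleFunctors C).shiftIso n 0 n (by lia)).symm.app a) ?_
  exact ((singleFunctors C).shiftIso (i : ℤ) (t - n) 0 (by lia)).app b ≪≫
    ((singleFunctors C).shiftIso n (t - n) t (by lia)).symm.app b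

variable {F} in
lemma mapBij_single (hF : IsStrongSerre F) (N : ℕ) : ∀ (a : C) (n t : ℤ) (Y : DerivedCategory C)
    (_ : Y.IsGE t) (_ : n - t < N), MapBij F ((singleFunctor C n).obj a) Y := by
  induction N with
  | zero =>
    intro a n t Y hY h
    exact mapBij_of_lt F _ _ n t inferInstance hY (by simpa using h)
  | succ N ih =>
    intro a n t Y hY h
    push_cast at h
    obtain ⟨b, Z, hZ, f, g, k, mem⟩ := exists_single_triangle Y t
    refine MapBij.five _ _ mem ?_ ?_ ?_ ?_
    · exact ih a n (t + 2) _ (TStructure.t.isGE_shift Z (t + 1) (-1) (t + 2)) (by lia)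
    · exact mapBij_single_single hF a b n t
    · exact ih a n (t + 1) _ hZ (by lia)
    · exact (mapBij_single_single hF a b n (t - 1)).of_iso (Iso.refl _)
        (((singleFunctors C).shiftIso 1 (t - 1) t (by lia)).symm.app b)

variable {F} in
lemma mapBij_single_plus (hF : IsStrongSerre F) (a : C) (n : ℤ) (Y : DerivedCategory C)
    (hY : IsPlus Y) : MapBij F ((singleFunctor C n).obj a) Y := by
  obtain ⟨t, ht⟩ := (isPlus_iff Y).1 hY
  exact mapBij_single hF (n - t + 1).toNat a n t Y ht (by lia)

end Bij

section Repr

open Pretriangulated Triangulated DerivedCategory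

lemma adj_aux₁ {C : Type u} [Category.{v} C] {M : Type u'} [Category.{v'} M]
    {F : C ⥤ M} {G : M ⥤ C} (adj : F ⊣ G) {A : C} {B : M} (f : A ⟶ G.obj B) :
    adj.unit.app A ≫ G.map (F.map f ≫ adj.counit.app B) = f := by simp

lemma adj_aux₂ {C : Type u} [Category.{v} C] {M : Type u'} [Category.{v'} M]
    {F : C ⥤ M} {G : M ⥤ C} (adj : F ⊣ G) {A : C} {B : M} (g : F.obj A ⟶ B) :
    F.map (adj.unit.app A ≫ G.map g) ≫ adj.counit.app B = g := by simp

section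

variable {C : Type u} [Category.{v} C] [Abelian C] [HasDerivedCategory.{w} C]

lemma Q_map_surjective_of_isKInjective (K L : CochainComplex C ℤ) [L.IsKInjective]
    (f : Q.obj K ⟶ Q.obj L) : ∃ φ : K ⟶ L, Q.map φ = f := by
  obtain ⟨g, hg⟩ := (CochainComplex.IsKInjective.Qh_map_bijective
    ((HomotopyCategory.quotient _ _).obj K) L).2
    ((quotientCompQhIso C).hom.app K ≫ f ≫ (quotientCompQhIso C).inv.app L)
  obtain ⟨φ, rfl⟩ := (HomotopyCategory.quotient _ _).map_surjective g
  refine ⟨φ, ?_⟩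
  have := (quotientCompQhIso C).hom.naturality φ
  dsimp at this
  rw [hg] at this
  simpa using this.symm

lemma homotopy_of_Q_map_eq_zero (K L : CochainComplex C ℤ) [L.IsKInjective]
    (φ : K ⟶ L) (h : Q.map φ = 0) : Nonempty (Homotopy φ 0) := by
  refine ⟨HomotopyCategory.homotopyOfEq _ _ ?_⟩
  apply (CochainComplex.IsKInjective.Qh_map_bijective _ L).1
  have := (quotientCompQhIso C).hom.naturality φ
  dsimp at this
  rw [h, comp_zero] at this
  rw [Functor.map_zero, Functor.map_zero]
  rw [← cancel_mono ((quotientCompQhIso C).hom.app L), this, zero_comp]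

lemma Q_map_eq_zero_of_homotopy (K L : CochainComplex C ℤ)
    (φ : K ⟶ L) (h : Homotopy φ 0) : Q.map φ = 0 := by
  have h0 := HomotopyCategory.eq_of_homotopy _ _ h
  have := (quotientCompQhIso C).hom.naturality φ
  dsimp at this
  rw [h0, Functor.map_zero, Functor.map_zero, zero_comp] at this
  rw [← cancel_epi ((quotientCompQhIso C).hom.app K), ← this, comp_zero]

end

variable {C : Type u} [Category.{v} C] [Abelian C] [HasDerivedCategory.{w} C]
    {M : Type u'} [Category.{v'} M] [Abelian M] [EnoughInjectives M] [HasDerivedCategory.{w'} M]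
    (F : C ⥤ M) [F.Additive] [PreservesFiniteLimits F] [PreservesFiniteColimits F]

lemma exists_repr (G : M ⥤ C) (adj : F ⊣ G) (Y : DerivedCategory M) (hY : IsPlus Y) :
    ∃ (R : DerivedCategory C) (_ : IsPlus R) (ε : F.mapDerivedCategory.obj R ⟶ Y),
      ∀ X : DerivedCategory C, Function.Bijective
        (fun f : X ⟶ R => F.mapDerivedCategory.map f ≫ ε) := by
  have : G.Additive := adj.right_adjoint_additive
  obtain ⟨t, ht⟩ := (isPlus_iff Y).1 hY
  obtain ⟨Y₀, _, ⟨e₀⟩⟩ := exists_iso_Q_obj_of_isGE Y t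
  obtain ⟨J, i, _, hJ, _⟩ :=
    CochainComplex.Plus.modelCategoryQuillen.exists_quasiIso_injective Y₀ t
  let e : Y ≅ Q.obj J := e₀ ≪≫ asIso (Q.map i)
  have : J.IsKInjective := CochainComplex.isKInjective_of_injective J t
  let F' := F.mapHomologicalComplex (ComplexShape.up ℤ)
  let G' := G.mapHomologicalComplex (ComplexShape.up ℤ)
  let GJ : CochainComplex C ℤ := G'.obj J
  have hGJ : GJ.IsStrictlyGE t := by
    rw [CochainComplex.isStrictlyGE_iff]
    intro i hi
    exact G.map_isZero (J.isZero_of_isStrictlyGE t i hi)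
  have (n : ℤ) : Injective (GJ.X n) := Injective.injective_of_adjoint adj (J.X n)
  have : GJ.IsKInjective := CochainComplex.isKInjective_of_injective GJ t
  let c : F'.obj GJ ⟶ J :=
    { f := fun n => adj.counit.app (J.X n)
      comm' := fun i j _ => (adj.counit.naturality (J.d i j)).symm }
  let α := F.mapDerivedCategoryFactors
  refine ⟨Q.obj GJ, (isPlus_iff _).2 ⟨t, inferInstance⟩,
    α.hom.app GJ ≫ Q.map c ≫ e.inv, fun X => ?_⟩
  have key : ∀ {K : CochainComplex C ℤ} (ψ : K ⟶ GJ),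
      F.mapDerivedCategory.map (Q.map ψ) ≫ α.hom.app GJ ≫ Q.map c ≫ e.inv =
        α.hom.app K ≫ Q.map (F'.map ψ ≫ c) ≫ e.inv := by
    intro K ψ
    rw [← Category.assoc, F.mapDerivedCategoryFactors_hom_naturality]
    simp [α, F']
  let K := Q.objPreimage X
  let eX : Q.obj K ≅ X := Q.objObjPreimageIso X
  let u : K ⟶ G'.obj (F'.obj K) :=
    { f := fun n => adj.unit.app (K.X n)
      comm' := fun i j _ => (adj.unit.naturality (K.d i j)).symm }
  constructor
  · intro f f' hff'
    rw [← sub_eq_zero]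
    have hf : F.mapDerivedCategory.map (f - f') ≫ α.hom.app GJ ≫ Q.map c ≫ e.inv = 0 := by
      rw [Functor.map_sub, Preadditive.sub_comp, sub_eq_zero]
      exact hff'
    generalize f - f' = f at hf
    obtain ⟨ψ, hψ⟩ := Q_map_surjective_of_isKInjective K GJ (eX.hom ≫ f)
    have h1 := key ψ
    rw [hψ, Functor.map_comp, Category.assoc, hf, comp_zero] at h1
    have h2 : Q.map (F'.map ψ ≫ c) = 0 := by
      rw [← cancel_mono e.inv, ← cancel_epi (α.hom.app K), ← h1, zero_comp, comp_zero]
    obtain ⟨h3⟩ := homotopy_of_Q_map_eq_zero _ _ _ h2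
    have h4 : Homotopy (u ≫ G'.map (F'.map ψ ≫ c)) (u ≫ G'.map 0) :=
      (G.mapHomotopy h3).compLeft u
    have h5 : u ≫ G'.map (F'.map ψ ≫ c) = ψ := by
      ext n
      exact adj_aux₁ adj (A := K.X n) (B := J.X n) (ψ.f n)
    rw [h5, Functor.map_zero, comp_zero] at h4
    have h6 := Q_map_eq_zero_of_homotopy _ _ _ h4
    rw [hψ] at h6
    rw [← cancel_epi eX.hom, h6, comp_zero]
  · intro g
    obtain ⟨φ, hφ⟩ := Q_map_surjective_of_isKInjective (F'.obj K) J
      (α.inv.app K ≫ F.mapDerivedCategory.map eX.hom ≫ g ≫ e.hom)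
    let ψ : K ⟶ GJ := u ≫ G'.map φ
    have h5 : F'.map ψ ≫ c = φ := by
      ext n
      exact adj_aux₂ adj (A := K.X n) (B := J.X n) (φ.f n)
    refine ⟨eX.inv ≫ Q.map ψ, ?_⟩
    dsimp only
    rw [Functor.map_comp, Category.assoc, key, h5, hφ]
    simp [← Functor.map_comp_assoc]

end Repr

section Main

open Pretriangulated Triangulated DerivedCategory

lemma hom_cone_eq_zero {C : Type u} [Category.{v} C] [Abelian C] [HasDerivedCategory.{w} C]
    (T : Triangle (DerivedCategory C)) (hT : T ∈ distTriang _) (X X' : DerivedCategory C)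
    (e : X'⟦(1 : ℤ)⟧ ≅ X)
    (hs : ∀ g : X ⟶ T.obj₂, ∃ k : X ⟶ T.obj₁, k ≫ T.mor₁ = g)
    (hi : ∀ k : X' ⟶ T.obj₁, k ≫ T.mor₁ = 0 → k = 0)
    (f : X ⟶ T.obj₃) : f = 0 := by
  obtain ⟨k, hk⟩ := (shiftFunctor (DerivedCategory C) (1 : ℤ)).map_surjective
    (e.hom ≫ f ≫ T.mor₃)
  have hk0 : k = 0 := by
    apply hi
    apply (shiftFunctor (DerivedCategory C) (1 : ℤ)).map_injective
    rw [Functor.map_comp, hk, Functor.map_zero, Category.assoc, Category.assoc,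
      comp_distTriang_mor_zero₃₁ T hT, comp_zero, comp_zero]
  rw [hk0, Functor.map_zero] at hk
  have h3 : f ≫ T.mor₃ = 0 := by
    rw [← cancel_epi e.hom, ← hk, comp_zero]
  obtain ⟨g, rfl⟩ := Triangle.coyoneda_exact₃ T hT f h3
  obtain ⟨k, rfl⟩ := hs g
  rw [Category.assoc, comp_distTriang_mor_zero₁₂ T hT, comp_zero]

variable {C : Type u} [Category.{v} C] [Abelian C] [HasDerivedCategory.{w} C]
    {M : Type u'} [Category.{v'} M] [Abelian M] [HasDerivedCategory.{w'} M]
    (F : C ⥤ M) [F.Additive] [PreservesFiniteLimits F] [PreservesFiniteColimits F]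

lemma isIso_unit (hF : IsStrongSerre F) (Y R : DerivedCategory C) (hY : IsPlus Y) (hR : IsPlus R)
    (ε : F.mapDerivedCategory.obj R ⟶ F.mapDerivedCategory.obj Y)
    (hε : ∀ X : DerivedCategory C, Function.Bijective
        (fun f : X ⟶ R => F.mapDerivedCategory.map f ≫ ε))
    (η : Y ⟶ R) (hη : F.mapDerivedCategory.map η ≫ ε = 𝟙 _) : IsIso η := by
  obtain ⟨Z, p, q, hT⟩ := distinguished_cocone_triangle η
  have hZ : IsPlus Z := isPlus_cone _ hT hY hR
  have hcomp : ∀ {X : DerivedCategory C} (k : X ⟶ Y),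
      F.mapDerivedCategory.map (k ≫ η) ≫ ε = F.mapDerivedCategory.map k := by
    intro X k
    rw [Functor.map_comp, Category.assoc, hη, Category.comp_id]
  refine (Triangle.isZero₃_iff_isIso₁ _ hT).1 (isZero_of_step Z hZ fun t _ => ?_)
  rw [IsZero.iff_id_eq_zero]
  apply hom_homology_eq_zero Z t
  intro f
  refine hom_cone_eq_zero _ hT _ _ (((singleFunctors C).shiftIso 1 t (t+1) (by omega)).app _)
    ?_ ?_ f
  · intro (g : _ ⟶ R)
    obtain ⟨k, hk⟩ := (mapBij_single_plus hF _ t Y hY).2 (F.mapDerivedCategory.map g ≫ ε)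
    refine ⟨k, (hε _).1 ?_⟩
    exact (hcomp k).trans hk
  · intro (k : _ ⟶ Y) (hk : k ≫ η = 0)
    apply (mapBij_single_plus hF _ (t + 1) Y hY).1
    change F.mapDerivedCategory.map k = F.mapDerivedCategory.map 0
    rw [← hcomp, hk, Functor.map_zero, Functor.map_zero, zero_comp]

lemma isIso_counit [F.Full] [F.Faithful] (hF : IsStrongSerre F) (Y : DerivedCategory M)
    (R : DerivedCategory C) (hY : IsPlus Y) (hR : IsPlus R)
    (hY' : ∀ k : ℤ, F.essImage ((homologyFunctor M k).obj Y))
    (ε : F.mapDerivedCategory.obj R ⟶ Y)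
    (hε : ∀ X : DerivedCategory C, Function.Bijective
        (fun f : X ⟶ R => F.mapDerivedCategory.map f ≫ ε)) : IsIso ε := by
  obtain ⟨Z, p, q, hT⟩ := distinguished_cocone_triangle ε
  have hZ : IsPlus Z := isPlus_cone _ hT (isPlus_map F R hR) hY
  refine (Triangle.isZero₃_iff_isIso₁ _ hT).1 (isZero_of_step Z hZ fun t _ => ?_)
  have hom0 : ∀ (a : C) (f : (singleFunctor M t).obj (F.obj a) ⟶ Z), f = 0 := by
    intro a f
    have e1 : F.mapDerivedCategory.obj ((singleFunctor C t).obj a) ≅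
      (singleFunctor M t).obj (F.obj a) := (F.mapDerivedCategorySingleFunctor t).app a
    have e2 : (F.mapDerivedCategory.obj ((singleFunctor C (t+1)).obj a))⟦(1 : ℤ)⟧ ≅
      F.mapDerivedCategory.obj ((singleFunctor C t).obj a) :=
      ((F.mapDerivedCategory.commShiftIso (1 : ℤ)).app _).symm ≪≫
        F.mapDerivedCategory.mapIso
          (((singleFunctors C).shiftIso 1 t (t+1) (by omega)).app a)
    rw [← cancel_epi e1.hom, comp_zero]
    refine hom_cone_eq_zero _ hT _ _ e2 ?_ ?_ _
    · intro (g : _ ⟶ Y)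
      obtain ⟨k, hk⟩ := (hε _).2 g
      exact ⟨F.mapDerivedCategory.map k, hk⟩
    · intro (k : _ ⟶ F.mapDerivedCategory.obj R) (hk : k ≫ ε = 0)
      obtain ⟨k, rfl⟩ := (mapBij_single_plus hF _ (t + 1) R hR).2 k
      have : k = 0 := by
        apply (hε _).1
        change _ = F.mapDerivedCategory.map 0 ≫ ε
        rw [Functor.map_zero, zero_comp]
        exact hk
      rw [this]
      exact F.mapDerivedCategory.map_zero _ _
  have hom1 : ∀ (B : M) (_ : F.essImage B) (g : B ⟶ (homologyFunctor M t).obj Z), g = 0 := by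
    rintro B ⟨a, ⟨e⟩⟩ g
    rw [← cancel_epi e.hom, comp_zero]
    exact hom_homology_eq_zero Z t (F.obj a) (hom0 a) _
  rw [IsZero.iff_id_eq_zero]
  apply hom1
  have hp : (homologyFunctor M t).map p = 0 := hom1 _ (hY' t) _
  have hδ := (HomologySequence.exact₃ _ hT t (t+1) rfl).mono_g hp
  have ex := HomologySequence.exact₁ _ hT t (t+1) rfl
  have lim := ex.fIsKernel
  obtain ⟨b, ⟨eb⟩⟩ := hY' (t+1)
  obtain ⟨ea⟩ := exists_homology_iso F R (t+1)
  let m := F.preimage (ea.inv ≫ (homologyFunctor M (t+1)).map ε ≫ eb.inv)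
  have hm : F.map m = ea.inv ≫ (homologyFunctor M (t+1)).map ε ≫ eb.inv := F.map_preimage _
  refine ⟨kernel m, ⟨PreservesKernel.iso F m ≪≫ ?_⟩⟩
  refine kernel.mapIso (F.map m) ((homologyFunctor M (t+1)).map ε) ea.symm eb (by simp [hm]) ≪≫ ?_
  exact (limit.isLimit _).conePointUniqueUpToIso lim

end Main

theorem plus_equivalence_of_strong_serre
    {C : Type u} [Category.{v} C] [Abelian C] [EnoughInjectives C] [HasDerivedCategory.{w} C]
    {M : Type u'} [Category.{v'} M] [Abelian M] [EnoughInjectives M] [HasDerivedCategory.{w'} M]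
    (F : C ⥤ M) [F.Additive] [PreservesFiniteLimits F] [PreservesFiniteColimits F]
    [F.Full] [F.Faithful] (G : M ⥤ C) (adj : F ⊣ G)
    (hF : IsStrongSerre F) :
    (∀ X Y : DerivedCategory C, IsPlus X → IsPlus Y →
        Function.Bijective (fun f : X ⟶ Y => F.mapDerivedCategory.map f)) ∧
      (∀ Y : DerivedCategory M, IsPlus Y →
        (∀ k : ℤ, F.essImage ((DerivedCategory.homologyFunctor M k).obj Y)) →
        ∃ X : DerivedCategory C, IsPlus X ∧ Nonempty (F.mapDerivedCategory.obj X ≅ Y)) := by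
  refine ⟨fun X Y _ hY => ?_, fun Y hY hY' => ?_⟩
  · obtain ⟨R, hR, ε, hε⟩ := exists_repr F G adj (F.mapDerivedCategory.obj Y) (isPlus_map F Y hY)
    obtain ⟨η, hη⟩ := (hε Y).2 (𝟙 _)
    have hη' : F.mapDerivedCategory.map η ≫ ε = 𝟙 _ := hη
    have : IsIso η := isIso_unit F hF Y R hY hR ε hε η hη'
    have hcomp : ∀ (k : X ⟶ Y),
        F.mapDerivedCategory.map (k ≫ η) ≫ ε = F.mapDerivedCategory.map k := by
      intro k
      rw [Functor.map_comp, Category.assoc, hη', Category.comp_id]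
    constructor
    · intro f g hfg
      rw [← cancel_mono η]
      apply (hε X).1
      exact (hcomp f).trans (hfg.trans (hcomp g).symm)
    · intro g
      obtain ⟨k, hk⟩ := (hε X).2 g
      refine ⟨k ≫ inv η, ?_⟩
      change F.mapDerivedCategory.map _ = _
      rw [← hcomp, Category.assoc, IsIso.inv_hom_id, Category.comp_id]
      exact hk
  · obtain ⟨R, hR, ε, hε⟩ := exists_repr F G adj Y hY
    have := isIso_counit F hF Y R hY hR hY' ε hε
    exact ⟨R, hR, ⟨asIso ε⟩⟩
end
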